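/- For any non-identity permutation w, let η = max(η(w), 0). Then for every m ≥ η, 𝔖_{1^m×w} = Σ_a c_a 𝔉_{0^{m−η}×a}, where c_a denotes the coefficient of 𝔉_a in the (unique) fundamental slide expansion of 𝔖_{1^η×w}. In particular, the Stanley symmetric function satisfies S_w(X) = Σ_a c_a F_{flat(a)}(X). Moreover, this is tight: if for some n and some m > n one has 𝔖_{1^m×w} = Σ_a [𝔉_a | 𝔖_{1^n×w}] 𝔉_{0^{m−n}×a}, then n ≥ η(w). -/

import Mathlib

open scoped Classical

namespace SlidePaper

/-- Sum of the first `i` entries of a weak composition of length `n`. -/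
def psum {n : ℕ} (a : Fin n → ℕ) (i : ℕ) : ℕ :=
  ∑ j ∈ Finset.univ.filter (fun j : Fin n => (j : ℕ) < i), a j

/-- `b` dominates `a`: all partial sums of `b` are at least those of `a`. -/
def Dominates {n : ℕ} (b a : Fin n → ℕ) : Prop :=
  ∀ i : Fin (n + 1), psum a i ≤ psum b i

/-- The flattening of a weak composition: the list of its nonzero entries in order. -/
def flat {n : ℕ} (a : Fin n → ℕ) : List ℕ :=
  (List.ofFn a).filter (fun x => x ≠ 0)

/-- `β` refines `α`: `β` splits into consecutive blocks with sums `α₁, α₂, …`. -/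
def Refines (β α : List ℕ) : Prop :=
  ∃ L : List (List ℕ), L.flatten = β ∧ L.map List.sum = α

/-- All weak compositions of length `n` with entries at most `k`. -/
def wcFinset (n k : ℕ) : Finset (Fin n → ℕ) :=
  Fintype.piFinset fun _ => Finset.range (k + 1)

/-- The monomial slide polynomial `𝔐_a`. -/
noncomputable def slideM {n : ℕ} (a : Fin n → ℕ) : MvPolynomial (Fin n) ℤ :=
  ∑ b ∈ (wcFinset n (∑ i, a i)).filter (fun b => Dominates b a ∧ flat b = flat a),
    MvPolynomial.monomial (Finsupp.equivFunOnFinite.symm b) 1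

/-- The fundamental slide polynomial `𝔉_a`. -/
noncomputable def slideF {n : ℕ} (a : Fin n → ℕ) : MvPolynomial (Fin n) ℤ :=
  ∑ b ∈ (wcFinset n (∑ i, a i)).filter (fun b => Dominates b a ∧ Refines (flat b) (flat a)),
    MvPolynomial.monomial (Finsupp.equivFunOnFinite.symm b) 1

/-- A weak composition is quasi-flat if its nonzero entries occupy consecutive positions. -/
def QuasiFlat {n : ℕ} (a : Fin n → ℕ) : Prop :=
  ∀ i j l : Fin n, i ≤ j → j ≤ l → a i ≠ 0 → a l ≠ 0 → a j ≠ 0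

/-- `b` strongly dominates `a`. -/
def StronglyDominates {n : ℕ} (b a : Fin n → ℕ) : Prop :=
  Dominates b a ∧ ∀ c : Fin n → ℕ, Dominates c a → flat c = flat b → Dominates c b

/-- The exponent vector placing the parts of `α` at the positions `i`. -/
noncomputable def placeExp {n : ℕ} (α : List ℕ) (i : Fin α.length → Fin n) : Fin n →₀ ℕ :=
  ∑ t : Fin α.length, Finsupp.single (i t) (α.get t)

/-- `f` is quasisymmetric in the variables `x_1, …, x_k` (0-indexed: `x_0, …, x_{k-1}`). -/
def IsQuasisymmetricIn {n : ℕ} (k : ℕ) (f : MvPolynomial (Fin n) ℤ) : Prop :=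
  ∀ α : List ℕ, (∀ x ∈ α, 0 < x) →
    ∀ i j : Fin α.length → Fin n, StrictMono i → StrictMono j →
      (∀ t, (i t : ℕ) < k) → (∀ t, (j t : ℕ) < k) →
      MvPolynomial.coeff (placeExp α i) f = MvPolynomial.coeff (placeExp α j) f

/-- The monomial quasisymmetric polynomial `M_α(x_1, …, x_k)` inside `ℤ[x_1, …, x_n]`. -/
noncomputable def Mqs (n k : ℕ) (α : List ℕ) : MvPolynomial (Fin n) ℤ :=
  ∑ i ∈ (Finset.univ : Finset (Fin α.length → Fin n)).filter
      (fun i : Fin α.length → Fin n => StrictMono i ∧ ∀ t, (i t : ℕ) < k),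
    ∏ t : Fin α.length, (MvPolynomial.X (i t) : MvPolynomial (Fin n) ℤ) ^ α.get t

/-- The fundamental quasisymmetric polynomial `F_α(x_1, …, x_k)` inside `ℤ[x_1, …, x_n]`. -/
noncomputable def Fqs (n k : ℕ) (α : List ℕ) : MvPolynomial (Fin n) ℤ :=
  ∑ c ∈ (Finset.univ : Finset (Composition α.sum)).filter
      (fun c => Refines c.blocks α ∧ c.blocks.length ≤ k),
    Mqs n k c.blocks

/-- Place the weak composition `a` (of length `N`) at offset `k` inside length `M`. -/
def shiftComp {N : ℕ} (k M : ℕ) (a : Fin N → ℕ) : Fin M → ℕ :=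
  fun i => if h : k ≤ (i : ℕ) ∧ (i : ℕ) - k < N then a ⟨(i : ℕ) - k, h.2⟩ else 0

/-- Spread the values `g` to positions `ι` inside a weak composition of length `n`. -/
def spread {l n : ℕ} (ι : Fin l → Fin n) (g : Fin l → ℕ) : Fin n → ℕ :=
  fun i => ∑ k, if ι k = i then g k else 0

/-- The monomial quasisymmetric function `M_α` in infinitely many variables. -/
noncomputable def MqsFun (α : List ℕ) : MvPowerSeries ℕ ℤ :=
  fun d => if ∃ i : Fin α.length → ℕ, StrictMono i ∧
      d = ∑ t : Fin α.length, Finsupp.single (i t) (α.get t) then 1 else 0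

/-- The fundamental quasisymmetric function `F_α` in infinitely many variables. -/
noncomputable def FqsFun (α : List ℕ) : MvPowerSeries ℕ ℤ :=
  ∑ c ∈ (Finset.univ : Finset (Composition α.sum)).filter (fun c => Refines c.blocks α),
    MqsFun c.blocks

/-- The cells of the Young diagram of `lam` (French notation): row `r` (from the
bottom, 0-indexed) has `lam.get r` cells. -/
abbrev Cells (lam : List ℕ) := Σ r : Fin lam.length, Fin (lam.get r)

/-- A filling of `lam` with entries in `{1, …, n}` (encoded as `Fin n`) is a semistandard
Young tableau: rows weakly increase left to right, columns strictly increase bottom to top. -/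
def IsSSYT {n : ℕ} {lam : List ℕ} (T : Cells lam → Fin n) : Prop :=
  (∀ (r : Fin lam.length) (c c' : Fin (lam.get r)), c ≤ c' → T ⟨r, c⟩ ≤ T ⟨r, c'⟩) ∧
  (∀ (r r' : Fin lam.length) (c' : Fin (lam.get r')) (h : (c' : ℕ) < lam.get r),
      (r : ℕ) < (r' : ℕ) → T ⟨r, ⟨c', h⟩⟩ < T ⟨r', c'⟩)

/-- The weight of a filling: the `v`-th entry counts the occurrences of the value `v`. -/
def wtT {n : ℕ} {lam : List ℕ} (T : Cells lam → Fin n) : Fin n → ℕ :=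
  fun v => (Finset.univ.filter (fun x : Cells lam => T x = v)).card

/-- A filling is quasi-Yamanouchi if for every value `v > 1`, the leftmost occurrence of `v`
lies weakly left of some occurrence of `v - 1`. -/
def IsQY {n : ℕ} {lam : List ℕ} (T : Cells lam → Fin n) : Prop :=
  ∀ (v : Fin n) (x : Cells lam), T x = v → 0 < (v : ℕ) →
    (∀ y : Cells lam, T y = v → (x.2 : ℕ) ≤ (y.2 : ℕ)) →
    ∃ z : Cells lam, (T z : ℕ) + 1 = (v : ℕ) ∧ (x.2 : ℕ) ≤ (z.2 : ℕ)

/-- The Schur polynomial `s_lam(x_1, …, x_n)` as the generating function of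
semistandard Young tableaux. -/
noncomputable def schurPoly (n : ℕ) (lam : List ℕ) : MvPolynomial (Fin n) ℤ :=
  ∑ T ∈ (Finset.univ : Finset (Cells lam → Fin n)).filter (fun T => IsSSYT T),
    MvPolynomial.monomial (Finsupp.equivFunOnFinite.symm (wtT T)) 1

/-- One destandardization step on fillings: for some value `v` occurring in `T` whose
leftmost occurrence is strictly right of every occurrence of `v - 1`, every `v` is
decremented to `v - 1`. -/
def TabStep {n : ℕ} {lam : List ℕ} (T T' : Cells lam → Fin n) : Prop :=
  ∃ v : Fin n, 0 < (v : ℕ) ∧ (∃ x, T x = v) ∧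
    (∀ x y : Cells lam, T x = v → (T y : ℕ) + 1 = (v : ℕ) → (y.2 : ℕ) < (x.2 : ℕ)) ∧
    ∀ x : Cells lam, (T' x : ℕ) = if T x = v then (v : ℕ) - 1 else (T x : ℕ)

/-- The reading word of a set of crosses: rows are read from top to bottom, each row from
left to right, the cross in (0-indexed) row `i` and column `j` recording the letter `i + j`
(representing the simple transposition swapping `i + j` and `i + j + 1` of `{0, 1, 2, …}`). -/
def readWord (P : Finset (ℕ × ℕ)) : List ℕ :=
  ((List.range (P.sup Prod.fst + 1)).reverse).flatMap
    (fun i => ((List.range (P.sup Prod.snd + 1)).filter (fun j => decide ((i, j) ∈ P))).map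
      (fun j => i + j))

/-- The permutation `s_{i_ℓ} ⋯ s_{i_1}` associated to the word `(i_1, …, i_ℓ)`,
where `s_k` swaps `k` and `k + 1`. -/
def wordPerm (l : List ℕ) : Equiv.Perm ℕ :=
  ((l.map (fun k => Equiv.swap k (k + 1))).reverse).prod

/-- A word is reduced if no shorter word has the same product. -/
def IsReducedWord (l : List ℕ) : Prop :=
  ∀ l' : List ℕ, wordPerm l' = wordPerm l → l.length ≤ l'.length

/-- `P` is a reduced pipe dream of shape `w`: the pipes trace out `w` and no two pipes
cross more than once, equivalently the reading word of `P` is a reduced word for `w`. -/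
def IsPD (w : Equiv.Perm ℕ) (P : Finset (ℕ × ℕ)) : Prop :=
  wordPerm (readWord P) = w ∧ IsReducedWord (readWord P)

/-- `P` is a quasi-Yamanouchi pipe dream of shape `w`: for every row, the westernmost cross
is in the first column or lies weakly west of some cross in the row above. -/
def IsQPD (w : Equiv.Perm ℕ) (P : Finset (ℕ × ℕ)) : Prop :=
  IsPD w P ∧ ∀ i j : ℕ, (i, j) ∈ P → (∀ j', (i, j') ∈ P → j ≤ j') →
    (j = 0 ∨ ∃ j', (i + 1, j') ∈ P ∧ j ≤ j')

/-- One destandardization step on pipe dreams: a row with no cross in the first column,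
all of whose crosses lie strictly east of every cross in the row above, has all its
crosses moved one step northwest. -/
def PDStep (P P' : Finset (ℕ × ℕ)) : Prop :=
  ∃ r : ℕ, (∃ j, (r, j) ∈ P) ∧ (r, 0) ∉ P ∧
    (∀ j j', (r, j) ∈ P → (r + 1, j') ∈ P → j' < j) ∧
    P' = P.filter (fun p => p.1 ≠ r) ∪
      (P.filter (fun p => p.1 = r)).image (fun p => (r + 1, p.2 - 1))

/-- The number of crosses of `P` in (0-indexed) row `i`. -/
def rowWt (P : Finset (ℕ × ℕ)) (i : ℕ) : ℕ := (P.filter (fun p => p.1 = i)).card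

/-- The weight of a pipe dream, as a weak composition of length `n`. -/
def wtFin (n : ℕ) (P : Finset (ℕ × ℕ)) : Fin n → ℕ := fun i => rowWt P (i : ℕ)

/-- The flattened weight of a pipe dream: the list of nonzero row counts, bottom row first. -/
def flatWt (P : Finset (ℕ × ℕ)) : List ℕ :=
  ((List.range (P.sup Prod.fst + 1)).map (rowWt P)).filter (fun x => x ≠ 0)

/-- The Schubert polynomial of `w` in the variables `x_1, …, x_n`, as the generating
function of reduced pipe dreams of shape `w`. -/
noncomputable def SchubertPoly (n : ℕ) (w : Equiv.Perm ℕ) : MvPolynomial (Fin n) ℤ :=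
  ∑ᶠ P ∈ {P : Finset (ℕ × ℕ) | IsPD w P},
    MvPolynomial.monomial (Finsupp.equivFunOnFinite.symm (wtFin n P)) 1

/-- The Lehmer code of `w` (0-indexed): `lehmer w i` counts `j > i` with `w j < w i`. -/
noncomputable def lehmer (w : Equiv.Perm ℕ) (i : ℕ) : ℕ :=
  Set.ncard {j : ℕ | i < j ∧ w j < w i}

/-- The Lehmer code of `w` as a weak composition of length `n`. -/
noncomputable def lehmerFin (n : ℕ) (w : Equiv.Perm ℕ) : Fin n → ℕ :=
  fun i => lehmer w (i : ℕ)

/-- The number of inversions of `w`. -/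
noncomputable def invCount (w : Equiv.Perm ℕ) : ℕ :=
  Set.ncard {p : ℕ × ℕ | p.1 < p.2 ∧ w p.2 < w p.1}

/-- The largest entry of the Lehmer code of `w`. -/
noncomputable def maxLehmer (w : Equiv.Perm ℕ) : ℕ :=
  sSup (Set.range (lehmer w))

/-- The (0-indexed) position of the first descent of `w`. -/
noncomputable def firstDescent (w : Equiv.Perm ℕ) : ℕ :=
  sInf {i : ℕ | w (i + 1) < w i}

/-- `δ(w) = 1` if every position attaining `max(L(w))` is at or before the first descent,
and `δ(w) = 0` otherwise. -/
noncomputable def delta (w : Equiv.Perm ℕ) : ℤ :=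
  if ∀ i : ℕ, lehmer w i = maxLehmer w → i ≤ firstDescent w then 1 else 0

/-- `η(w) = inv(w) − max(L(w)) + δ(w) − min{i : w_i > w_{i+1}}`. -/
noncomputable def eta (w : Equiv.Perm ℕ) : ℤ :=
  (invCount w : ℤ) - (maxLehmer w : ℤ) + delta w - ((firstDescent w : ℤ) + 1)

/-- The decomposition of a list into maximal strictly increasing runs. -/
def runsStrict : List ℕ → List (List ℕ)
  | [] => []
  | x :: rest =>
    match runsStrict rest, rest with
    | r :: rs, y :: _ => if x < y then (x :: r) :: rs else [x] :: r :: rs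
    | _, _ => [[x]]

/-- The descent composition of a word: lengths of its maximal increasing runs, a new run
beginning whenever a letter is followed by a weakly smaller letter. -/
def desStrict (l : List ℕ) : List ℕ := (runsStrict l).map List.length

/-- The decomposition of a list into maximal weakly increasing runs. -/
def runsWeak : List ℕ → List (List ℕ)
  | [] => []
  | x :: rest =>
    match runsWeak rest, rest with
    | r :: rs, y :: _ => if x ≤ y then (x :: r) :: rs else [x] :: r :: rs
    | _, _ => [[x]]

/-- The descent composition of a word: the lengths of its maximal weakly increasing runs. -/
def desComp (l : List ℕ) : List ℕ := (runsWeak l).map List.length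

/-- The permutation `1^m × w`, fixing `0, …, m-1` and acting by `w` shifted by `m` above. -/
def shiftPerm (m : ℕ) (w : Equiv.Perm ℕ) : Equiv.Perm ℕ where
  toFun i := if i < m then i else w (i - m) + m
  invFun i := if i < m then i else w.symm (i - m) + m
  left_inv i := by
    dsimp only
    by_cases h : i < m
    · simp [h]
    · have h2 : ¬ (w (i - m) + m < m) := by omega
      rw [if_neg h, if_neg h2, Nat.add_sub_cancel, Equiv.symm_apply_apply]
      omega
  right_inv i := by
    dsimp only
    by_cases h : i < m
    · simp [h]
    · have h2 : ¬ (w.symm (i - m) + m < m) := by omega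
      rw [if_neg h, if_neg h2, Nat.add_sub_cancel, Equiv.apply_symm_apply]
      omega

/-- The quasi-shuffle product of two (strong) compositions, as a multiset of compositions. -/
def qShuffle : List ℕ → List ℕ → Multiset (List ℕ)
  | [], β => {β}
  | α, [] => {α}
  | a :: α, b :: β =>
      ((qShuffle α (b :: β)).map (a :: ·)) + ((qShuffle (a :: α) β).map (b :: ·)) +
        ((qShuffle α β).map ((a + b) :: ·))
termination_by α β => α.length + β.length
decreasing_by all_goals (simp only [List.length_cons]; omega)

def shuffles : List ℕ → List ℕ → Multiset (List ℕ)
  | [], B => {B}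
  | A, [] => {A}
  | x :: A, y :: B =>
      ((shuffles A (y :: B)).map (x :: ·)) + ((shuffles (x :: A) B).map (y :: ·))
termination_by A B => A.length + B.length
decreasing_by all_goals (simp only [List.length_cons]; omega)

/-- The word `(2n-1)^{a_1} (2n-3)^{a_2} ⋯ 1^{a_n}` associated to a weak composition `a`. -/
def wordA {n : ℕ} (a : Fin n → ℕ) : List ℕ :=
  (List.ofFn (fun i : Fin n => List.replicate (a i) (2 * n - 2 * (i : ℕ) - 1))).flatten

/-- The word `(2n)^{b_1} (2n-2)^{b_2} ⋯ 2^{b_n}` associated to a weak composition `b`. -/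
def wordB {n : ℕ} (b : Fin n → ℕ) : List ℕ :=
  (List.ofFn (fun i : Fin n => List.replicate (b i) (2 * n - 2 * (i : ℕ)))).flatten

/-- A list (padded with trailing zeros) dominates a weak composition of length `n`. -/
def DominatesList {n : ℕ} (l : List ℕ) (a : Fin n → ℕ) : Prop :=
  ∀ i : Fin (n + 1), psum a (i : ℕ) ≤ ((l.take (i : ℕ)).sum)

/-- The number of letters of the `A`-word (the odd letters) in the `k`-th weakly
increasing run of `C`. -/
def runCountA (C : List ℕ) (k : Fin (runsWeak C).length) : ℕ :=
  (((runsWeak C).get k).filter (fun z => z % 2 = 1)).length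

/-- The number of letters of the `B`-word (the even letters) in the `k`-th weakly
increasing run of `C`. -/
def runCountB (C : List ℕ) (k : Fin (runsWeak C).length) : ℕ :=
  (((runsWeak C).get k).filter (fun z => z % 2 = 0)).length

/-- The length of the `k`-th weakly increasing run of `C`. -/
def runLen (C : List ℕ) (k : Fin (runsWeak C).length) : ℕ :=
  ((runsWeak C).get k).length

/-- `c = bump_{(a,b)}(C)`: the unique weak composition of length `n` obtained by inserting
zero parts into `Des(C)` so that the correspondingly placed `Des_A` and `Des_B` dominate
`a` and `b`, minimal in dominance order among all such insertions. -/
def IsBumpS {n : ℕ} (a b : Fin n → ℕ) (C : List ℕ) (c : Fin n → ℕ) : Prop :=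
  ∃ ι : Fin (runsWeak C).length → Fin n, StrictMono ι ∧
    c = spread ι (runLen C) ∧
    Dominates (spread ι (runCountA C)) a ∧ Dominates (spread ι (runCountB C)) b ∧
    ∀ ι' : Fin (runsWeak C).length → Fin n, StrictMono ι' →
      Dominates (spread ι' (runCountA C)) a → Dominates (spread ι' (runCountB C)) b →
      Dominates (spread ι' (runLen C)) c

/-- The multiplicity `[c ∣ a ⧢ b]` of `c` in the slide product of `a` and `b`: the number of
shuffles `C` of the words of `a` and `b` lying in the shuffle set `SS(a,b)` with
`bump_{(a,b)}(C) = c`. -/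
noncomputable def slideMult {n : ℕ} (a b c : Fin n → ℕ) : ℕ :=
  Multiset.card ((shuffles (wordA a) (wordB b)).filter
    (fun C => DominatesList ((runsWeak C).map
        (fun r => (r.filter (fun z => z % 2 = 1)).length)) a ∧
      DominatesList ((runsWeak C).map (fun r => (r.filter (fun z => z % 2 = 0)).length)) b ∧
      IsBumpS a b C c))

/-- Membership in the quasi-shuffle set `QSS(a,b)`: a pair `(γ_a, γ_b)` of weak compositions
of a common length at most `n` with `γ_a ≥ a`, `flat(γ_a) = flat(a)`, `γ_b ≥ b`,
`flat(γ_b) = flat(b)` (after padding with trailing zeros), and all entries of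
`γ_a + γ_b` positive. -/
def InQSS {n : ℕ} (a b : Fin n → ℕ) (x : (l : ℕ) × (Fin l → ℕ) × (Fin l → ℕ)) : Prop :=
  x.1 ≤ n ∧
  Dominates (shiftComp 0 n x.2.1) a ∧ flat x.2.1 = flat a ∧
  Dominates (shiftComp 0 n x.2.2) b ∧ flat x.2.2 = flat b ∧
  ∀ k : Fin x.1, 0 < x.2.1 k + x.2.2 k

/-- `c = bump_{(a,b)}(γ_a, γ_b)`: the unique weak composition `c` of length `n` with
`flat(c) = γ_a + γ_b` whose decomposition `c = c_a + c_b` satisfies `c_a ≥ a` and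
`c_b ≥ b`, minimal in dominance order among all such compositions. -/
def IsBumpQ {n : ℕ} (a b : Fin n → ℕ) (x : (l : ℕ) × (Fin l → ℕ) × (Fin l → ℕ))
    (c : Fin n → ℕ) : Prop :=
  ∃ ι : Fin x.1 → Fin n, StrictMono ι ∧
    c = spread ι (fun k => x.2.1 k + x.2.2 k) ∧
    Dominates (spread ι x.2.1) a ∧ Dominates (spread ι x.2.2) b ∧
    ∀ ι' : Fin x.1 → Fin n, StrictMono ι' →
      Dominates (spread ι' x.2.1) a → Dominates (spread ι' x.2.2) b →
      Dominates (spread ι' (fun k => x.2.1 k + x.2.2 k)) c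

/-- The multiplicity `[c ∣ a ⧻ b]` of `c` in the quasi-slide product of `a` and `b`: the
number of pairs in the quasi-shuffle set `QSS(a,b)` whose bump is `c`. -/
noncomputable def qsMult {n : ℕ} (a b c : Fin n → ℕ) : ℕ :=
  Nat.card {x : (l : ℕ) × (Fin l → ℕ) × (Fin l → ℕ) // InQSS a b x ∧ IsBumpQ a b x c}

/-- The Stanley symmetric function `S_w`. -/
noncomputable def StanleySym (w : Equiv.Perm ℕ) : MvPowerSeries ℕ ℤ :=
  ∑ᶠ l ∈ {l : List ℕ | wordPerm l = w ∧ IsReducedWord l}, FqsFun (desStrict l)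

/-- The simple transposition exchanging `p` and `p + 1`. -/
abbrev adjSwap (p : ℕ) : Equiv.Perm ℕ := Equiv.swap p (p + 1)

/-- `w` moves only finitely many points. -/
def FinSupp (w : Equiv.Perm ℕ) : Prop := ∃ N, ∀ i, N ≤ i → w i = i

/-- The word `l` removes the inversions of `w` one at a time. -/
def Red : Equiv.Perm ℕ → List ℕ → Prop
  | w, [] => w = 1
  | w, p :: l => w (p + 1) < w p ∧ Red (w * adjSwap p) l

theorem wordPerm_nil : wordPerm [] = 1 := rfl

theorem wordPerm_cons (p : ℕ) (l : List ℕ) :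
    wordPerm (p :: l) = wordPerm l * adjSwap p := by
  simp [wordPerm]

theorem mul_adjSwap_self (w : Equiv.Perm ℕ) (p : ℕ) : w * adjSwap p * adjSwap p = w := by
  rw [mul_assoc, Equiv.swap_mul_self, mul_one]

theorem adjSwap_apply (p i : ℕ) :
    adjSwap p i = if i = p then p + 1 else if i = p + 1 then p else i :=
  Equiv.swap_apply_def p (p + 1) i

theorem mul_adjSwap_fix {w : Equiv.Perm ℕ} {N p : ℕ} (hN : ∀ i, N ≤ i → w i = i)
    (hp : p + 1 < N) : ∀ i, N ≤ i → (w * adjSwap p) i = i := by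
  intro i hi
  rw [Equiv.Perm.mul_apply, adjSwap_apply, if_neg (by omega), if_neg (by omega), hN i hi]

theorem FinSupp.mul_adjSwap {w : Equiv.Perm ℕ} (h : FinSupp w) (p : ℕ) :
    FinSupp (w * adjSwap p) := by
  obtain ⟨N, hN⟩ := h
  exact ⟨max N (p + 2), mul_adjSwap_fix (fun i hi => hN i (by omega)) (by omega)⟩

theorem finSupp_wordPerm (l : List ℕ) : FinSupp (wordPerm l) := by
  induction l with
  | nil => exact ⟨0, fun i _ => rfl⟩
  | cons p l ih => rw [wordPerm_cons]; exact ih.mul_adjSwap p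

theorem apply_lt_of_fix {w : Equiv.Perm ℕ} {N i : ℕ} (hN : ∀ i, N ≤ i → w i = i) (hi : i < N) :
    w i < N := by
  by_contra h
  have := w.injective (hN (w i) (by omega))
  omega

theorem descent_lt_of_fix {w : Equiv.Perm ℕ} {N i : ℕ} (hN : ∀ i, N ≤ i → w i = i)
    (hi : w (i + 1) < w i) : i + 1 < N := by
  by_contra h
  rw [hN (i + 1) (by omega)] at hi
  by_cases h' : i < N
  · have := apply_lt_of_fix hN h'
    omega
  · rw [hN i (by omega)] at hi
    omega

theorem inversions_subset {w : Equiv.Perm ℕ} {N : ℕ} (hN : ∀ i, N ≤ i → w i = i) :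
    {p : ℕ × ℕ | p.1 < p.2 ∧ w p.2 < w p.1} ⊆
      ↑(Finset.range N ×ˢ Finset.range N : Finset (ℕ × ℕ)) := by
  rintro ⟨i, j⟩ ⟨h1, h2⟩
  dsimp only at h1 h2
  have hj : j < N := by
    by_contra h
    rw [hN j (by omega)] at h2
    by_cases h' : i < N
    · have := apply_lt_of_fix hN h'
      omega
    · rw [hN i (by omega)] at h2
      omega
  simp only [Finset.coe_product, Finset.coe_range, Set.mem_prod, Set.mem_Iio]
  omega

theorem finite_inversions {w : Equiv.Perm ℕ} (h : FinSupp w) :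
    {p : ℕ × ℕ | p.1 < p.2 ∧ w p.2 < w p.1}.Finite := by
  obtain ⟨N, hN⟩ := h
  exact (Finset.finite_toSet _).subset (inversions_subset hN)

theorem invCount_mul_adjSwap {w : Equiv.Perm ℕ} (h : FinSupp w) {p : ℕ}
    (hp : w (p + 1) < w p) : invCount w = invCount (w * adjSwap p) + 1 := by
  have hfin := finite_inversions (h.mul_adjSwap p)
  have hinj : Function.Injective (fun x : ℕ × ℕ => (adjSwap p x.1, adjSwap p x.2)) := by
    intro x y hxy
    simpa [Prod.ext_iff] using hxy
  have key : {x : ℕ × ℕ | x.1 < x.2 ∧ w x.2 < w x.1} =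
      insert (p, p + 1) ((fun x : ℕ × ℕ => (adjSwap p x.1, adjSwap p x.2)) ''
        {x : ℕ × ℕ | x.1 < x.2 ∧ (w * adjSwap p) x.2 < (w * adjSwap p) x.1}) := by
    ext ⟨i, j⟩
    simp only [Set.mem_ofPred_eq, Set.mem_insert_iff, Prod.mk.injEq, Set.mem_image, Prod.exists,
      Equiv.Perm.mul_apply]
    constructor
    · rintro ⟨h1, h2⟩
      by_cases hij : i = p ∧ j = p + 1
      · exact Or.inl hij
      · refine Or.inr ⟨adjSwap p i, adjSwap p j, ⟨?_, ?_⟩, ?_, ?_⟩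
        · rw [adjSwap_apply, adjSwap_apply]; grind
        all_goals simp [h2]
    · rintro (⟨rfl, rfl⟩ | ⟨a, b, ⟨h1, h2⟩, rfl, rfl⟩)
      · exact ⟨by omega, hp⟩
      · refine ⟨?_, h2⟩
        by_cases hab : a = p ∧ b = p + 1
        · obtain ⟨rfl, rfl⟩ := hab
          simp only [Equiv.swap_apply_left, Equiv.swap_apply_right] at h2
          omega
        · rw [adjSwap_apply, adjSwap_apply]; grind
  rw [invCount, key, Set.ncard_insert_of_notMem _ (hfin.image _),
    Set.ncard_image_of_injective _ hinj, invCount]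
  rintro ⟨⟨a, b⟩, ⟨h1, -⟩, h2⟩
  simp only [Prod.mk.injEq, adjSwap_apply] at h2
  grind

theorem invCount_one : invCount 1 = 0 := by
  have : {p : ℕ × ℕ | p.1 < p.2 ∧ (1 : Equiv.Perm ℕ) p.2 < (1 : Equiv.Perm ℕ) p.1} = ∅ := by
    ext x
    simp only [Equiv.Perm.one_apply, Set.mem_ofPred_eq, Set.mem_empty_iff_false, iff_false]
    omega
  rw [invCount, this, Set.ncard_empty]

theorem eq_one_of_no_descent {w : Equiv.Perm ℕ} (h : ∀ p, ¬ w (p + 1) < w p) : w = 1 := by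
  have hmono : StrictMono w := by
    refine strictMono_nat_of_lt_succ fun p => ?_
    have h1 := h p
    have h2 : w p ≠ w (p + 1) := fun e => by simpa using w.injective e
    omega
  have hle : ∀ i, i ≤ w i := fun i => hmono.le_apply
  ext i
  refine le_antisymm ?_ (hle i)
  have := hle (w.symm (w i))
  by_contra hlt
  simp only [Equiv.Perm.one_apply, not_le] at hlt
  obtain ⟨j, hj⟩ := w.surjective i
  have : j ≤ i := (hle j).trans hj.le
  rcases this.lt_or_eq with hji | rfl
  · have hsymm : StrictMono w.symm := by
      intro a b hab
      by_contra hc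
      have := hmono.monotone (not_lt.mp hc)
      simp only [Equiv.apply_symm_apply] at this
      omega
    have := hsymm.le_apply (x := i)
    rw [← hj, Equiv.symm_apply_apply, hj] at this
    omega
  · omega

theorem exists_red {w : Equiv.Perm ℕ} (h : FinSupp w) : ∃ l, Red w l := by
  induction hn : invCount w generalizing w with
  | zero =>
    refine ⟨[], eq_one_of_no_descent fun p hp => ?_⟩
    have := invCount_mul_adjSwap h hp
    omega
  | succ n ih =>
    have : ∃ p, w (p + 1) < w p := by
      by_contra! hc
      rw [eq_one_of_no_descent (fun p => not_lt.mpr (hc p)), invCount_one] at hn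
      omega
    obtain ⟨p, hp⟩ := this
    have := invCount_mul_adjSwap h hp
    obtain ⟨l, hl⟩ := ih (h.mul_adjSwap p) (by omega)
    exact ⟨p :: l, hp, hl⟩

theorem Red.wordPerm_eq {w : Equiv.Perm ℕ} {l : List ℕ} (h : Red w l) : wordPerm l = w := by
  induction l generalizing w with
  | nil => exact h.symm
  | cons p l ih => rw [wordPerm_cons, ih h.2, mul_adjSwap_self]

theorem Red.finSupp {w : Equiv.Perm ℕ} {l : List ℕ} (h : Red w l) : FinSupp w :=
  h.wordPerm_eq ▸ finSupp_wordPerm l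

theorem Red.length_eq {w : Equiv.Perm ℕ} {l : List ℕ} (h : Red w l) : l.length = invCount w := by
  induction l generalizing w with
  | nil => rw [show w = 1 from h, invCount_one]; rfl
  | cons p l ih => rw [invCount_mul_adjSwap h.finSupp h.1, ← ih h.2]; rfl

theorem invCount_adjSwap_cases {w : Equiv.Perm ℕ} (h : FinSupp w) (p : ℕ) :
    (w (p + 1) < w p ∧ invCount w = invCount (w * adjSwap p) + 1) ∨
      (w p < w (p + 1) ∧ invCount (w * adjSwap p) = invCount w + 1) := by
  rcases lt_trichotomy (w (p + 1)) (w p) with hlt | heq | hgt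
  · exact Or.inl ⟨hlt, invCount_mul_adjSwap h hlt⟩
  · simpa using w.injective heq
  · refine Or.inr ⟨hgt, ?_⟩
    have := invCount_mul_adjSwap (h.mul_adjSwap p) (p := p) (by simpa using hgt)
    rwa [mul_adjSwap_self] at this

theorem red_of_length_le {l : List ℕ} (h : l.length ≤ invCount (wordPerm l)) :
    Red (wordPerm l) l ∧ invCount (wordPerm l) ≤ l.length := by
  suffices H : ∀ l : List ℕ, invCount (wordPerm l) ≤ l.length ∧
      (l.length ≤ invCount (wordPerm l) → Red (wordPerm l) l) from ⟨(H l).2 h, (H l).1⟩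
  intro l
  induction l with
  | nil => exact ⟨by rw [wordPerm_nil, invCount_one]; rfl, fun _ => rfl⟩
  | cons p l ih =>
    have h1 := invCount_adjSwap_cases (finSupp_wordPerm (p :: l)) p
    rw [wordPerm_cons, mul_adjSwap_self] at h1
    rw [wordPerm_cons, List.length_cons]
    refine ⟨by omega, fun h2 => ?_⟩
    rcases h1 with ⟨h3, h4⟩ | ⟨h3, h4⟩
    · exact ⟨h3, by rw [mul_adjSwap_self]; exact ih.2 (by omega)⟩
    · omega

theorem invCount_wordPerm_le (l : List ℕ) : invCount (wordPerm l) ≤ l.length := by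
  by_contra h
  have := (red_of_length_le (l := l) (by omega)).2
  omega

theorem red_iff {w : Equiv.Perm ℕ} {l : List ℕ} :
    Red w l ↔ wordPerm l = w ∧ IsReducedWord l := by
  constructor
  · intro h
    refine ⟨h.wordPerm_eq, fun l' hl' => ?_⟩
    rw [h.length_eq, ← h.wordPerm_eq, ← hl']
    exact invCount_wordPerm_le l'
  · rintro ⟨rfl, h⟩
    obtain ⟨l', hl'⟩ := exists_red (finSupp_wordPerm l)
    have := h l' hl'.wordPerm_eq
    rw [hl'.length_eq] at this
    exact (red_of_length_le this).1

theorem Red.letters {w : Equiv.Perm ℕ} {N : ℕ} (hN : ∀ i, N ≤ i → w i = i) {l : List ℕ}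
    (h : Red w l) : ∀ p ∈ l, p + 1 < N := by
  induction l generalizing w with
  | nil => simp
  | cons p l ih =>
    have hp := descent_lt_of_fix hN h.1
    intro q hq
    rcases List.mem_cons.mp hq with rfl | hq
    · exact hp
    · exact ih (mul_adjSwap_fix hN hp) h.2 q hq

theorem shiftPerm_apply (m : ℕ) (w : Equiv.Perm ℕ) (i : ℕ) :
    shiftPerm m w i = if i < m then i else w (i - m) + m := rfl

theorem shiftPerm_one (m : ℕ) : shiftPerm m 1 = 1 := by
  ext i
  simp only [shiftPerm_apply, Equiv.Perm.one_apply]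
  split_ifs <;> omega

theorem shiftPerm_mul_adjSwap (m : ℕ) (w : Equiv.Perm ℕ) (p : ℕ) :
    shiftPerm m w * adjSwap (p + m) = shiftPerm m (w * adjSwap p) := by
  ext i
  simp only [shiftPerm_apply, Equiv.Perm.mul_apply, adjSwap_apply]
  grind

theorem shiftPerm_descent {m : ℕ} {w : Equiv.Perm ℕ} {p : ℕ} :
    shiftPerm m w (p + 1) < shiftPerm m w p ↔ m ≤ p ∧ w (p - m + 1) < w (p - m) := by
  simp only [shiftPerm_apply]
  by_cases h : p < m
  · by_cases h' : p + 1 < m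
    · simp only [h, h', if_true]; omega
    · simp only [h, h', if_true, if_false]; omega
  · rw [if_neg h, if_neg (by omega), show p + 1 - m = p - m + 1 by omega]
    omega

theorem red_shiftPerm {m : ℕ} {w : Equiv.Perm ℕ} {l : List ℕ} :
    Red (shiftPerm m w) l ↔ ∃ l', Red w l' ∧ l = l'.map (· + m) := by
  induction l generalizing w with
  | nil =>
    constructor
    · intro h
      refine ⟨[], ?_, rfl⟩
      ext i
      have := congrArg (fun v : Equiv.Perm ℕ => v (i + m)) (show shiftPerm m w = 1 from h)
      simpa [shiftPerm_apply] using this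
    · rintro ⟨l', h, hl⟩
      obtain rfl : l' = [] := by simpa using hl.symm
      rw [show w = 1 from h, shiftPerm_one]
      rfl
  | cons p l ih =>
    constructor
    · rintro ⟨h1, h2⟩
      rw [shiftPerm_descent] at h1
      obtain ⟨q, rfl⟩ : ∃ q, p = q + m := ⟨p - m, by omega⟩
      rw [shiftPerm_mul_adjSwap] at h2
      obtain ⟨l', h3, rfl⟩ := ih.mp h2
      refine ⟨q :: l', ⟨?_, h3⟩, rfl⟩
      simpa using h1.2
    · rintro ⟨l', h, hl⟩
      match l', h, hl with
      | q :: l', ⟨h1, h2⟩, hl =>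
        simp only [List.map_cons, List.cons.injEq] at hl
        obtain ⟨rfl, rfl⟩ := hl
        refine ⟨shiftPerm_descent.mpr ⟨by omega, by simpa using h1⟩, ?_⟩
        rw [shiftPerm_mul_adjSwap]
        exact ih.mpr ⟨l', h2, rfl⟩

theorem finite_red {w : Equiv.Perm ℕ} : {l | Red w l}.Finite := by
  by_cases h : FinSupp w
  · obtain ⟨N, hN⟩ := h
    refine ((List.finite_length_eq (Fin N) (invCount w)).image
      (List.map (fun i : Fin N => (i : ℕ)))).subset ?_
    intro l hl
    have hlet := hl.letters hN
    refine ⟨l.pmap (fun p hp => (⟨p, hp⟩ : Fin N)) (fun p hp => by have := hlet p hp; omega), ?_, ?_⟩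
    · simp [hl.length_eq]
    · simp [List.map_pmap]
  · convert Set.finite_empty
    ext l
    simp only [Set.mem_ofPred_eq, Set.mem_empty_iff_false, iff_false]
    exact fun hl => h hl.finSupp

/-- The finite set of reduced words of `w`. -/
noncomputable def redWords (w : Equiv.Perm ℕ) : Finset (List ℕ) := finite_red (w := w).toFinset

theorem mem_redWords {w : Equiv.Perm ℕ} {l : List ℕ} : l ∈ redWords w ↔ Red w l := by
  simp [redWords]

/-- The number of weak descents of a word. -/
def des : List ℕ → ℕ
  | [] => 0
  | [_] => 0
  | p :: q :: l => (if q ≤ p then 1 else 0) + des (q :: l)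

/-- The number of strict ascents of a word. -/
def asc : List ℕ → ℕ
  | [] => 0
  | [_] => 0
  | p :: q :: l => (if p < q then 1 else 0) + asc (q :: l)

/-- The least shift of the letters of a word for which it admits a compatible row sequence. -/
def need : List ℕ → ℕ
  | [] => 0
  | p :: l => max (des (p :: l) - p) (need l)

theorem des_add_asc (p : ℕ) (l : List ℕ) : des (p :: l) + asc (p :: l) = l.length := by
  induction l generalizing p with
  | nil => rfl
  | cons q l ih =>
    have := ih q
    simp only [des, asc, List.length_cons]
    split_ifs <;> omega

theorem finite_lt (w : Equiv.Perm ℕ) (i : ℕ) : {j | i < j ∧ w j < w i}.Finite := by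
  refine ((Set.finite_Iio (w i)).preimage w.injective.injOn).subset ?_
  rintro j ⟨-, hj⟩
  exact hj

theorem lehmer_one (i : ℕ) : lehmer 1 i = 0 := by
  have : {j | i < j ∧ (1 : Equiv.Perm ℕ) j < (1 : Equiv.Perm ℕ) i} = ∅ := by
    ext j
    simp only [Equiv.Perm.one_apply, Set.mem_ofPred_eq, Set.mem_empty_iff_false, iff_false]
    omega
  rw [lehmer, this, Set.ncard_empty]

theorem lehmer_eq_zero {w : Equiv.Perm ℕ} {N : ℕ} (hN : ∀ i, N ≤ i → w i = i) {i : ℕ}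
    (hi : N ≤ i) : lehmer w i = 0 := by
  have : {j | i < j ∧ w j < w i} = ∅ := by
    ext j
    simp only [Set.mem_ofPred_eq, Set.mem_empty_iff_false, iff_false]
    rintro ⟨h1, h2⟩
    rw [hN i hi, hN j (by omega)] at h2
    omega
  rw [lehmer, this, Set.ncard_empty]

theorem lehmer_mul_adjSwap_of_ne {w : Equiv.Perm ℕ} {p i : ℕ} (h1 : i ≠ p) (h2 : i ≠ p + 1) :
    lehmer (w * adjSwap p) i = lehmer w i := by
  rw [lehmer, lehmer, ← Set.ncard_image_of_injective _ (adjSwap p).injective]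
  congr 1
  ext j
  simp only [Set.mem_image, Set.mem_ofPred_eq, Equiv.Perm.mul_apply]
  constructor
  · rintro ⟨k, ⟨h3, h4⟩, rfl⟩
    refine ⟨?_, ?_⟩
    · rw [adjSwap_apply]; grind
    · rwa [show adjSwap p i = i by rw [adjSwap_apply]; grind] at h4
  · rintro ⟨h3, h4⟩
    refine ⟨adjSwap p j, ⟨?_, ?_⟩, ?_⟩
    · rw [adjSwap_apply]; grind
    · rw [show adjSwap p i = i by rw [adjSwap_apply]; grind]
      simpa using h4
    · simp

theorem lehmer_mul_adjSwap_left {w : Equiv.Perm ℕ} {p : ℕ} (hp : w (p + 1) < w p) :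
    lehmer (w * adjSwap p) p = lehmer w (p + 1) := by
  rw [lehmer, lehmer]
  congr 1
  ext j
  simp only [Set.mem_ofPred_eq, Equiv.Perm.mul_apply, adjSwap_apply]
  grind

theorem lehmer_mul_adjSwap_right {w : Equiv.Perm ℕ} {p : ℕ} (hp : w (p + 1) < w p) :
    lehmer w p = lehmer (w * adjSwap p) (p + 1) + 1 := by
  rw [lehmer, lehmer, ← Set.ncard_insert_of_notMem (a := p + 1) (by simp) (finite_lt _ _)]
  congr 1
  ext j
  simp only [Set.mem_ofPred_eq, Set.mem_insert_iff, Equiv.Perm.mul_apply, adjSwap_apply]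
  grind

theorem lehmer_le_succ {w : Equiv.Perm ℕ} {p : ℕ} (hp : ¬ w (p + 1) < w p) :
    lehmer w p ≤ lehmer w (p + 1) := by
  refine Set.ncard_le_ncard ?_ (finite_lt _ _)
  rintro j ⟨h1, h2⟩
  refine ⟨?_, by omega⟩
  rcases (Nat.succ_le_of_lt h1).lt_or_eq with h | rfl
  · exact h
  · exact absurd h2 hp

theorem lehmer_lt_of_descent {w : Equiv.Perm ℕ} {p : ℕ} (hp : w (p + 1) < w p) :
    lehmer w (p + 1) < lehmer w p := by
  rw [lehmer_mul_adjSwap_right hp, ← lehmer_mul_adjSwap_left hp]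
  refine Nat.lt_succ_of_le (lehmer_le_succ ?_)
  simp only [Equiv.Perm.mul_apply, Equiv.swap_apply_left, Equiv.swap_apply_right]
  omega

theorem lehmer_le_of_no_descent {w : Equiv.Perm ℕ} {i P : ℕ} (hiP : i ≤ P)
    (h : ∀ q, i ≤ q → q < P → ¬ w (q + 1) < w q) : lehmer w i ≤ lehmer w P := by
  induction P, hiP using Nat.le_induction with
  | base => exact le_rfl
  | succ P hP ih =>
    exact (ih fun q h1 h2 => h q h1 (by omega)).trans (lehmer_le_succ (h P hP (by omega)))

theorem le_asc {w : Equiv.Perm ℕ} {p : ℕ} {l : List ℕ} (h : Red w (p :: l)) (i : ℕ) :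
    lehmer w i ≤ asc (p :: l) + if i ≤ p then 1 else 0 := by
  induction l generalizing w p i with
  | nil =>
    obtain ⟨h1, h2⟩ := h
    have h2 : w * adjSwap p = 1 := h2
    by_cases hi : i = p
    · rw [hi, lehmer_mul_adjSwap_right h1, h2, lehmer_one]; simp
    by_cases hi' : i = p + 1
    · rw [hi', ← lehmer_mul_adjSwap_left h1, h2, lehmer_one]; simp
    · rw [← lehmer_mul_adjSwap_of_ne hi hi', h2, lehmer_one]; simp
  | cons q l ih =>
    obtain ⟨h1, h2⟩ := h
    have hpq : p ≠ q := by
      rintro rfl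
      have := h2.1
      simp only [Equiv.Perm.mul_apply, Equiv.swap_apply_left, Equiv.swap_apply_right] at this
      omega
    simp only [asc]
    by_cases hi : i = p
    · have := ih h2 (p + 1)
      rw [hi, lehmer_mul_adjSwap_right h1]
      split_ifs at this ⊢ <;> omega
    by_cases hi' : i = p + 1
    · have := ih h2 p
      rw [hi', ← lehmer_mul_adjSwap_left h1]
      split_ifs at this ⊢ <;> omega
    · have := ih h2 i
      rw [← lehmer_mul_adjSwap_of_ne hi hi']
      split_ifs at this ⊢ <;> omega

theorem need_le {w : Equiv.Perm ℕ} {l : List ℕ} (h : Red w l) {d n : ℕ}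
    (hd : ∀ p, p < d → ¬ w (p + 1) < w p) (i : ℕ)
    (H : l.length + (if i ≤ d then 1 else 0) ≤ lehmer w i + d + n + 1) : need l ≤ n := by
  induction l generalizing w d i with
  | nil => exact Nat.zero_le _
  | cons p l ih =>
    have hp := h.1
    have hdp : d ≤ p := by
      by_contra hc
      exact hd p (by omega) hp
    have h1 := des_add_asc p l
    have h2 := le_asc h i
    rw [List.length_cons] at H
    refine max_le ?_ ?_
    · rcases hdp.lt_or_eq with hlt | rfl
      · split_ifs at H h2 <;> omega
      · split_ifs at H h2 <;> omega
    · have hd' : ∀ q, q < (if d < p then d else d - 1) →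
          ¬ (w * adjSwap p) (q + 1) < (w * adjSwap p) q := by
        intro q hq
        simp only [Equiv.Perm.mul_apply, adjSwap_apply]
        have := hd q
        grind
      by_cases hi : i = p
      · refine ih h.2 hd' (p + 1) ?_
        rw [hi, lehmer_mul_adjSwap_right hp] at H
        split_ifs at H ⊢ <;> omega
      by_cases hi' : i = p + 1
      · refine ih h.2 hd' p ?_
        rw [hi', ← lehmer_mul_adjSwap_left hp] at H
        split_ifs at H ⊢ <;> omega
      · refine ih h.2 hd' i ?_
        rw [← lehmer_mul_adjSwap_of_ne hi hi'] at H
        split_ifs at H ⊢ <;> omega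

theorem exists_last_descent_lt {w : Equiv.Perm ℕ} {P : ℕ} (h : ∃ p, p < P ∧ w (p + 1) < w p) :
    ∃ p, p < P ∧ w (p + 1) < w p ∧ ∀ q, p < q → q < P → ¬ w (q + 1) < w q := by
  obtain ⟨p, hp⟩ := h
  obtain ⟨q, hq, hmax⟩ := ((Finset.range P).filter fun p => w (p + 1) < w p).exists_max_image id
    ⟨p, by simpa using hp⟩
  simp only [Finset.mem_filter, Finset.mem_range, id] at hq hmax
  exact ⟨q, hq.1, hq.2, fun r h1 h2 h3 => by have := hmax r ⟨h2, h3⟩; omega⟩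

theorem exists_last_descent {w : Equiv.Perm ℕ} (h : FinSupp w) (hw : w ≠ 1) :
    ∃ p, w (p + 1) < w p ∧ ∀ i, p < i → lehmer w i = 0 := by
  obtain ⟨N, hN⟩ := h
  have : ∃ p, w (p + 1) < w p := by
    by_contra! hc
    exact hw (eq_one_of_no_descent fun p => not_lt.mpr (hc p))
  obtain ⟨p, hp⟩ := this
  obtain ⟨q, h1, h2, h3⟩ := exists_last_descent_lt (w := w) (P := N)
    ⟨p, by have := descent_lt_of_fix hN hp; omega, hp⟩
  refine ⟨q, h2, fun i hi => ?_⟩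
  by_cases hiN : N ≤ i
  · exact lehmer_eq_zero hN hiN
  · have := lehmer_le_of_no_descent (w := w) (i := i) (P := N) (by omega)
      fun r h4 h5 => h3 r (by omega) h5
    rw [lehmer_eq_zero hN le_rfl] at this
    omega

theorem exists_red_asc_le {w : Equiv.Perm ℕ} (h : FinSupp w) {p K : ℕ} (hp : w (p + 1) < w p)
    (hK : ∀ i, lehmer w i ≤ K) :
    ∃ l, Red w (p :: l) ∧ asc (p :: l) ≤ K ∧
      ((∀ i, p < i → lehmer w i < K) → asc (p :: l) + 1 ≤ K) := by
  induction hn : invCount w generalizing w p K with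
  | zero =>
    have := invCount_mul_adjSwap h hp
    omega
  | succ n ih =>
    have hinv := invCount_mul_adjSwap h hp
    have hfs := h.mul_adjSwap p
    have hL1 := lehmer_mul_adjSwap_left hp
    have hL2 := lehmer_mul_adjSwap_right hp
    have hL3 : ∀ i, i ≠ p → i ≠ p + 1 → lehmer (w * adjSwap p) i = lehmer w i :=
      fun i h1 h2 => lehmer_mul_adjSwap_of_ne h1 h2
    have hKp := hK p
    have hKp1 := hK (p + 1)
    by_cases hw : w * adjSwap p = 1
    · refine ⟨[], ⟨hp, hw⟩, Nat.zero_le _, fun _ => ?_⟩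
      simp only [asc]
      omega
    obtain ⟨r, hr, hrl⟩ := exists_last_descent hfs hw
    have hrpos := lehmer_lt_of_descent hr
    have hK' : ∀ i, lehmer (w * adjSwap p) i ≤ K := by
      intro i
      by_cases h1 : i = p
      · rw [h1]; omega
      by_cases h2 : i = p + 1
      · rw [h2]; omega
      · rw [hL3 i h1 h2]; exact hK i
    have hasc : ∀ q l, asc (p :: q :: l) ≤ 1 + asc (q :: l) := by
      intro q l
      simp only [asc]
      split_ifs <;> omega
    by_cases hA : ∀ i, p < i → lehmer w i < K
    · by_cases hj : ∃ j, lehmer (w * adjSwap p) j = K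
      · obtain ⟨j, hj⟩ := hj
        have hge : ∀ i, p ≤ i → lehmer (w * adjSwap p) i < K := by
          intro i hi
          by_cases h1 : i = p
          · rw [h1, hL1]; exact hA _ (by omega)
          by_cases h2 : i = p + 1
          · rw [h2]; omega
          · rw [hL3 i h1 h2]; exact hA _ (by omega)
        have hjp : j < p := by
          by_contra hc
          have := hge j (by omega)
          omega
        have hex : ∃ q, q < p ∧ (w * adjSwap p) (q + 1) < (w * adjSwap p) q := by
          by_contra! hc
          have := lehmer_le_of_no_descent (w := w * adjSwap p) hjp.le
            fun q _ h2 => not_lt.mpr (hc q h2)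
          have := hge p le_rfl
          omega
        obtain ⟨q, hqp, hq, hlast⟩ := exists_last_descent_lt hex
        obtain ⟨l, h1, -, h3⟩ := ih hfs hq hK' (by omega)
        have h4 := h3 fun i hi => by
          by_cases hip : p ≤ i
          · exact hge i hip
          · have := lehmer_le_of_no_descent (w := w * adjSwap p) (i := i) (P := p) (by omega)
              fun r h5 h6 => hlast r (by omega) h6
            have := hge p le_rfl
            omega
        have h5 : asc (p :: q :: l) = asc (q :: l) := by
          simp only [asc]
          rw [if_neg (by omega), zero_add]
        exact ⟨q :: l, ⟨hp, h1⟩, by omega, fun _ => by omega⟩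
      · push Not at hj
        obtain ⟨l, h1, -, h3⟩ := ih hfs hr (K := K - 1)
          (fun i => by have := hK' i; have := hj i; omega) (by omega)
        have h4 := h3 fun i hi => by
          have := hK' r
          have := hj r
          rw [hrl i hi]
          omega
        have := hasc r l
        exact ⟨r :: l, ⟨hp, h1⟩, by omega, fun _ => by omega⟩
    · obtain ⟨l, h1, -, h3⟩ := ih hfs hr hK' (by omega)
      have h4 := h3 fun i hi => by
        have := hK' r
        rw [hrl i hi]
        omega
      have := hasc r l
      exact ⟨r :: l, ⟨hp, h1⟩, by omega, fun hc => absurd hc hA⟩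

theorem exists_red_need_eq_zero_aux {w : Equiv.Perm ℕ} (h : FinSupp w) {p : ℕ}
    (hp : w (p + 1) < w p) (hlast : ∀ i, p < i → lehmer w i = 0) (S : Finset ℕ)
    (hS : ∀ i, i ∈ S ↔ lehmer w i ≠ 0) :
    ∃ l, Red w (p :: l) ∧ des (p :: l) + 1 ≤ S.card ∧ need (p :: l) = 0 := by
  induction hn : invCount w generalizing w p S with
  | zero =>
    have := invCount_mul_adjSwap h hp
    omega
  | succ n ih =>
    have hinv := invCount_mul_adjSwap h hp
    have hfs := h.mul_adjSwap p
    have hL1 := lehmer_mul_adjSwap_left hp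
    have hL2 := lehmer_mul_adjSwap_right hp
    have hL3 : ∀ i, i ≠ p → i ≠ p + 1 → lehmer (w * adjSwap p) i = lehmer w i :=
      fun i h1 h2 => lehmer_mul_adjSwap_of_ne h1 h2
    have hp1 := hlast (p + 1) (by omega)
    have hcard : S.card ≤ p + 1 := by
      rw [← Finset.card_range (p + 1)]
      refine Finset.card_le_card fun i hi => ?_
      rw [Finset.mem_range]
      by_contra hc
      exact (hS i).mp hi (hlast i (by omega))
    have hpS : p ∈ S := (hS p).mpr (by omega)
    have hpos : 0 < S.card := Finset.card_pos.mpr ⟨p, hpS⟩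
    by_cases hw : w * adjSwap p = 1
    · exact ⟨[], ⟨hp, hw⟩, by simp only [des]; omega, by simp [need, des]⟩
    obtain ⟨r, hr, hrl⟩ := exists_last_descent hfs hw
    by_cases hone : lehmer w p = 1
    · obtain ⟨l, h1, h2, h3⟩ := ih hfs hr hrl (S.erase p) (fun i => by
        rw [Finset.mem_erase, hS]
        by_cases h1 : i = p
        · subst h1; simp only [ne_eq, not_true_eq_false, false_and, false_iff, not_not]; omega
        by_cases h2 : i = p + 1
        · subst h2; simp only [ne_eq, hp1, not_true_eq_false, and_false, false_iff]; omega
        · rw [hL3 i h1 h2]; simp [h1]) (by omega)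
      rw [Finset.card_erase_of_mem hpS] at h2
      have h4 : des (p :: r :: l) + 1 ≤ S.card := by
        simp only [des]
        split_ifs <;> omega
      refine ⟨r :: l, ⟨hp, h1⟩, h4, ?_⟩
      rw [need, h3]
      omega
    · obtain ⟨l, h1, h2, h3⟩ := ih hfs hr hrl (insert (p + 1) (S.erase p)) (fun i => by
        rw [Finset.mem_insert, Finset.mem_erase, hS]
        by_cases h1 : i = p
        · subst h1; simp only [ne_eq, not_true_eq_false, false_and, or_false]; omega
        by_cases h2 : i = p + 1
        · subst h2; simp only [true_or, true_iff]; omega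
        · rw [hL3 i h1 h2]; simp [h1, h2]) (by omega)
      rw [Finset.card_insert_of_notMem (by
          rw [Finset.mem_erase, hS]; omega), Finset.card_erase_of_mem hpS] at h2
      have hpr : p < r := by
        by_contra hc
        have := hrl (p + 1) (by omega)
        omega
      have h4 : des (p :: r :: l) + 1 ≤ S.card := by
        simp only [des]
        split_ifs <;> omega
      refine ⟨r :: l, ⟨hp, h1⟩, h4, ?_⟩
      rw [need, h3]
      omega

theorem exists_red_need_eq_zero {w : Equiv.Perm ℕ} (h : FinSupp w) :
    ∃ l, Red w l ∧ need l = 0 := by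
  by_cases hw : w = 1
  · exact ⟨[], hw, rfl⟩
  obtain ⟨p, hp, hlast⟩ := exists_last_descent h hw
  obtain ⟨l, h1, -, h3⟩ := exists_red_need_eq_zero_aux h hp hlast
    ((Finset.range (p + 1)).filter fun i => lehmer w i ≠ 0) (fun i => by
      rw [Finset.mem_filter, Finset.mem_range]
      refine ⟨fun hi => hi.2, fun hi => ⟨?_, hi⟩⟩
      by_contra hc
      exact hi (hlast i (by omega)))
  exact ⟨_, h1, h3⟩

/-- Commutation and braid moves on words. -/
inductive Step : List ℕ → List ℕ → Prop
  | comm (i j : ℕ) (b : List ℕ) : i + 1 < j → Step (i :: j :: b) (j :: i :: b)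
  | braid (i : ℕ) (b : List ℕ) : Step (i :: (i + 1) :: i :: b) ((i + 1) :: i :: (i + 1) :: b)
  | cons (p : ℕ) {l l' : List ℕ} : Step l l' → Step (p :: l) (p :: l')

set_option maxHeartbeats 1000000 in
theorem Step.close {l l' : List ℕ} (h : Step l l') :
    (need l ≤ need l' + 1 ∧ need l' ≤ need l + 1) ∧
      ∀ p, des (p :: l) ≤ des (p :: l') + 1 ∧ des (p :: l') ≤ des (p :: l) + 1 := by
  induction h with
  | comm i j b hij =>
    have hij1 : ¬ j ≤ i := by omega
    have hij2 : i ≤ j := by omega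
    cases b with
    | nil =>
      simp only [need, des, hij1, hij2, if_true, if_false]
      refine ⟨by omega, fun p => ?_⟩
      by_cases h1 : i ≤ p <;> by_cases h2 : j ≤ p <;> simp only [h1, h2, if_true, if_false] <;>
        omega
    | cons y b =>
      simp only [need]
      generalize hx : des (y :: b) = x
      simp only [des, hx, hij1, hij2, if_true, if_false]
      generalize need b = z
      refine ⟨?_, fun p => ?_⟩
      · by_cases h1 : y ≤ i <;> by_cases h2 : y ≤ j <;>
          simp only [h1, h2, if_true, if_false] <;> omega
      · by_cases h1 : y ≤ i <;> by_cases h2 : y ≤ j <;> by_cases h3 : i ≤ p <;>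
          by_cases h4 : j ≤ p <;> simp only [h1, h2, h3, h4, if_true, if_false] <;> omega
  | braid i b =>
    have hi1 : ¬ i + 1 ≤ i := by omega
    have hi2 : i ≤ i + 1 := by omega
    cases b with
    | nil =>
      simp only [need, des, hi1, hi2, if_true, if_false]
      refine ⟨by omega, fun p => ?_⟩
      by_cases h1 : i ≤ p <;> by_cases h2 : i + 1 ≤ p <;> simp only [h1, h2, if_true, if_false] <;>
        omega
    | cons y b =>
      simp only [need]
      generalize hx : des (y :: b) = x
      simp only [des, hx, hi1, hi2, if_true, if_false]
      generalize need b = z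
      refine ⟨?_, fun p => ?_⟩
      · by_cases h1 : y ≤ i <;> by_cases h2 : y ≤ i + 1 <;>
          simp only [h1, h2, if_true, if_false] <;> omega
      · by_cases h1 : y ≤ i <;> by_cases h2 : y ≤ i + 1 <;> by_cases h3 : i ≤ p <;>
          by_cases h4 : i + 1 ≤ p <;> simp only [h1, h2, h3, h4, if_true, if_false] <;> omega
  | cons p _ ih =>
    have := ih.2 p
    refine ⟨?_, fun q => ?_⟩
    · simp only [need]; omega
    · simp only [des]; omega

theorem adjSwap_comm {i j : ℕ} (h : i + 1 < j) :
    adjSwap i * adjSwap j = adjSwap j * adjSwap i := by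
  ext k
  simp only [Equiv.Perm.mul_apply, adjSwap_apply]
  grind

theorem adjSwap_braid (i : ℕ) :
    adjSwap i * adjSwap (i + 1) * adjSwap i = adjSwap (i + 1) * adjSwap i * adjSwap (i + 1) := by
  ext k
  simp only [Equiv.Perm.mul_apply, adjSwap_apply]
  grind

theorem Step.wordPerm_eq {l l' : List ℕ} (h : Step l l') :
    wordPerm l = wordPerm l' ∧ l.length = l'.length := by
  induction h with
  | comm i j b hij =>
    refine ⟨?_, rfl⟩
    simp only [wordPerm_cons, mul_assoc, adjSwap_comm hij]
  | braid i b =>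
    refine ⟨?_, rfl⟩
    have := adjSwap_braid i
    simp only [mul_assoc] at this
    simp only [wordPerm_cons, mul_assoc, this]
  | cons p _ ih => exact ⟨by rw [wordPerm_cons, wordPerm_cons, ih.1], by simp [ih.2]⟩

theorem Step.red_iff {w : Equiv.Perm ℕ} {l l' : List ℕ} (h : Step l l') :
    Red w l ↔ Red w l' := by
  have h1 := h.wordPerm_eq.1
  have h2 := h.wordPerm_eq.2
  constructor
  · intro hr
    have := red_of_length_le (l := l') (by
      rw [← h1, hr.wordPerm_eq, ← h2, hr.length_eq])
    rw [← h1, hr.wordPerm_eq] at this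
    exact this.1
  · intro hr
    have := red_of_length_le (l := l) (by
      rw [h1, hr.wordPerm_eq, h2, hr.length_eq])
    rw [h1, hr.wordPerm_eq] at this
    exact this.1

theorem eqvGen_cons (p : ℕ) {l l' : List ℕ} (h : Relation.EqvGen Step l l') :
    Relation.EqvGen Step (p :: l) (p :: l') := by
  induction h with
  | rel _ _ h => exact .rel _ _ (.cons p h)
  | refl _ => exact .refl _
  | symm _ _ _ ih => exact .symm _ _ ih
  | trans _ _ _ _ _ ih1 ih2 => exact .trans _ _ _ ih1 ih2

/-- Any two reduced words of a permutation are related by commutation and braid moves. -/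
theorem Red.eqvGen {w : Equiv.Perm ℕ} {l l' : List ℕ} (h : Red w l) (h' : Red w l') :
    Relation.EqvGen Step l l' := by
  induction hn : l.length generalizing w l l' with
  | zero =>
    have := h'.length_eq
    rw [← h.length_eq, hn] at this
    rw [List.length_eq_zero_iff.mp hn, List.length_eq_zero_iff.mp this]
    exact .refl _
  | succ n ih =>
    have ih' : ∀ {v : Equiv.Perm ℕ} {a b : List ℕ}, Red v a → Red v b → invCount v = n →
        Relation.EqvGen Step a b := fun ha hb hv => ih ha hb (ha.length_eq.trans hv)
    have hinv := h.length_eq.symm.trans hn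
    clear ih hn
    have hfs := h.finSupp
    match l, l', h, h' with
    | [], _, h, _ => rw [show w = 1 from h, invCount_one] at hinv; omega
    | _, [], _, h => rw [show w = 1 from h, invCount_one] at hinv; omega
    | p :: a, q :: b, ⟨hp, ha⟩, ⟨hq, hb⟩ =>
      have main : ∀ {p q : ℕ} {a b : List ℕ}, w (p + 1) < w p → Red (w * adjSwap p) a →
          w (q + 1) < w q → Red (w * adjSwap q) b → p < q →
          Relation.EqvGen Step (p :: a) (q :: b) := by
        intro p q a b hp ha hq hb hpq
        have h1 := invCount_mul_adjSwap hfs hp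
        have h2 := invCount_mul_adjSwap hfs hq
        by_cases hpq' : p + 1 < q
        · have e : w * adjSwap p * adjSwap q = w * adjSwap q * adjSwap p := by
            rw [mul_assoc, adjSwap_comm hpq', mul_assoc]
          obtain ⟨c, hc⟩ := exists_red ((hfs.mul_adjSwap p).mul_adjSwap q)
          have hpc : Red (w * adjSwap p) (q :: c) := by
            refine ⟨?_, hc⟩
            simp only [Equiv.Perm.mul_apply, adjSwap_apply]
            grind
          have hqc : Red (w * adjSwap q) (p :: c) := by
            refine ⟨?_, e ▸ hc⟩
            simp only [Equiv.Perm.mul_apply, adjSwap_apply]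
            grind
          exact .trans _ _ _ (eqvGen_cons p (ih' ha hpc (by omega)))
            (.trans _ _ _ (.rel _ _ (.comm p q c hpq'))
              (eqvGen_cons q (ih' hqc hb (by omega))))
        · obtain rfl : q = p + 1 := by omega
          have e : w * adjSwap p * adjSwap (p + 1) * adjSwap p =
              w * adjSwap (p + 1) * adjSwap p * adjSwap (p + 1) := by
            have := adjSwap_braid p
            simp only [mul_assoc] at this ⊢
            rw [this]
          obtain ⟨c, hc⟩ := exists_red
            (((hfs.mul_adjSwap p).mul_adjSwap (p + 1)).mul_adjSwap p)
          have hpc : Red (w * adjSwap p) ((p + 1) :: p :: c) := by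
            refine ⟨?_, ?_, hc⟩ <;>
            · simp only [Equiv.Perm.mul_apply, adjSwap_apply]
              grind
          have hqc : Red (w * adjSwap (p + 1)) (p :: (p + 1) :: c) := by
            refine ⟨?_, ?_, e ▸ hc⟩ <;>
            · simp only [Equiv.Perm.mul_apply, adjSwap_apply]
              grind
          exact .trans _ _ _ (eqvGen_cons p (ih' ha hpc (by omega)))
            (.trans _ _ _ (.rel _ _ (.braid p c))
              (eqvGen_cons (p + 1) (ih' hqc hb (by omega))))
      rcases lt_trichotomy p q with hlt | rfl | hgt
      · exact main hp ha hq hb hlt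
      · have := invCount_mul_adjSwap hfs hp
        exact eqvGen_cons p (ih' ha hb (by omega))
      · exact .symm _ _ (main hq hb hp ha hgt)

theorem exists_need_eq_of_eqvGen {w : Equiv.Perm ℕ} {a b : List ℕ}
    (h : Relation.EqvGen Step a b) :
    (Red w a ↔ Red w b) ∧ (Red w a → ∀ v, (need a ≤ v ∧ v ≤ need b) ∨ (need b ≤ v ∧ v ≤ need a) →
      ∃ c, Red w c ∧ need c = v) := by
  induction h with
  | rel a b h =>
    refine ⟨h.red_iff, fun ha v hv => ?_⟩
    have := h.close.1
    by_cases hva : v = need a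
    · exact ⟨a, ha, hva.symm⟩
    · exact ⟨b, h.red_iff.mp ha, by omega⟩
  | refl a => exact ⟨Iff.rfl, fun ha v hv => ⟨a, ha, by omega⟩⟩
  | symm a b _ ih =>
    exact ⟨ih.1.symm, fun ha v hv => ih.2 (ih.1.mpr ha) v hv.symm⟩
  | trans a b c _ _ ih1 ih2 =>
    refine ⟨ih1.1.trans ih2.1, fun ha v hv => ?_⟩
    by_cases h1 : (need a ≤ v ∧ v ≤ need b) ∨ (need b ≤ v ∧ v ≤ need a)
    · exact ih1.2 ha v h1
    · exact ih2.2 (ih1.1.mp ha) v (by omega)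

theorem exists_lehmer_eq_max {w : Equiv.Perm ℕ} (h : FinSupp w) :
    (∃ i, lehmer w i = maxLehmer w) ∧ ∀ i, lehmer w i ≤ maxLehmer w := by
  obtain ⟨N, hN⟩ := h
  have hbdd : BddAbove (Set.range (lehmer w)) := by
    refine ⟨∑ i ∈ Finset.range N, lehmer w i, ?_⟩
    rintro _ ⟨i, rfl⟩
    by_cases hi : i < N
    · exact Finset.single_le_sum (fun _ _ => Nat.zero_le _) (Finset.mem_range.mpr hi)
    · rw [lehmer_eq_zero hN (by omega)]
      exact Nat.zero_le _
  exact ⟨Nat.sSup_mem (Set.range_nonempty _) hbdd, fun i => le_csSup hbdd ⟨i, rfl⟩⟩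

theorem firstDescent_spec {w : Equiv.Perm ℕ} (hw : w ≠ 1) :
    w (firstDescent w + 1) < w (firstDescent w) ∧
      ∀ p, p < firstDescent w → ¬ w (p + 1) < w p := by
  have : {i : ℕ | w (i + 1) < w i}.Nonempty := by
    by_contra hc
    rw [Set.not_nonempty_iff_eq_empty, Set.eq_empty_iff_forall_notMem] at hc
    exact hw (eq_one_of_no_descent hc)
  exact ⟨Nat.sInf_mem this, fun p hp hc =>
    Nat.notMem_of_lt_sInf (s := {i : ℕ | w (i + 1) < w i}) hp hc⟩

theorem need_le_of_eta_le {w : Equiv.Perm ℕ} (hw : w ≠ 1) {l : List ℕ} (h : Red w l) {n : ℕ}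
    (hn : eta w ≤ n) : need l ≤ n := by
  have hd := (firstDescent_spec hw).2
  obtain ⟨⟨i, hi⟩, -⟩ := exists_lehmer_eq_max h.finSupp
  have hlen := h.length_eq
  unfold eta delta at hn
  split_ifs at hn with hδ
  · refine need_le h hd i ?_
    rw [if_pos (hδ i hi)]
    omega
  · push Not at hδ
    obtain ⟨j, hj, hj'⟩ := hδ
    refine need_le h hd j ?_
    rw [if_neg (by omega)]
    omega

theorem exists_eta_le_need {w : Equiv.Perm ℕ} (h : FinSupp w) (hw : w ≠ 1) :
    ∃ l, Red w l ∧ eta w ≤ need l := by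
  obtain ⟨⟨i, hi⟩, hmax⟩ := exists_lehmer_eq_max h
  obtain ⟨l, hl, h1, h2⟩ := exists_red_asc_le h (firstDescent_spec hw).1 hmax
  refine ⟨_, hl, ?_⟩
  have h3 := des_add_asc (firstDescent w) l
  have h4 := hl.length_eq
  rw [List.length_cons] at h4
  have h5 : des (firstDescent w :: l) - firstDescent w ≤ need (firstDescent w :: l) :=
    le_max_left _ _
  unfold eta delta
  split_ifs with hδ
  · have := h2 fun j hj => lt_of_le_of_ne (hmax j) fun e => by
      have := hδ j e
      omega
    omega
  · omega

theorem exists_red_need_eq {w : Equiv.Perm ℕ} (h : FinSupp w) (hw : w ≠ 1) {v : ℕ}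
    (hv : (v : ℤ) ≤ eta w) : ∃ l, Red w l ∧ need l = v := by
  obtain ⟨a, ha, ha'⟩ := exists_red_need_eq_zero h
  obtain ⟨b, hb, hb'⟩ := exists_eta_le_need h hw
  exact (exists_need_eq_of_eqvGen (ha.eqvGen hb)).2 ha v (Or.inl (by omega))

section NilCoxeter

variable {B : Type*} [Ring B]

theorem nil_mul {x y u : B} (hy : ∀ z, z * y = y * z) (hu : u * u = 0) :
    (1 + x * u) * (1 + y * u) = 1 + (x + y) * u := by
  have : x * u * (y * u) = 0 := by
    rw [mul_assoc, ← mul_assoc u, hy, mul_assoc y, hu, mul_zero, mul_zero]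
  rw [add_mul, mul_add, mul_add, this, add_mul]
  noncomm_ring

theorem yang_baxter {a b u v : B} (ha : ∀ z, z * a = a * z) (hb : ∀ z, z * b = b * z)
    (hu : u * u = 0) (hv : v * v = 0) (huv : u * v * u = v * u * v) :
    (1 + a * u) * (1 + (a + b) * v) * (1 + b * u) =
      (1 + b * v) * (1 + (a + b) * u) * (1 + a * v) := by
  have ua := ha u
  have va := ha v
  have ub := hb u
  have vb := hb v
  have ba := ha b
  have ua' : ∀ z, u * (a * z) = a * (u * z) := fun z => by rw [← mul_assoc, ua, mul_assoc]
  have va' : ∀ z, v * (a * z) = a * (v * z) := fun z => by rw [← mul_assoc, va, mul_assoc]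
  have ub' : ∀ z, u * (b * z) = b * (u * z) := fun z => by rw [← mul_assoc, ub, mul_assoc]
  have vb' : ∀ z, v * (b * z) = b * (v * z) := fun z => by rw [← mul_assoc, vb, mul_assoc]
  have ba' : ∀ z, b * (a * z) = a * (b * z) := fun z => by rw [← mul_assoc, ba, mul_assoc]
  rw [mul_assoc, mul_assoc] at huv
  simp only [mul_add, add_mul, mul_one, one_mul, mul_assoc, ua', va', ub',
    vb', ba', hu, hv, huv, mul_zero]
  abel

/-- The product of `1 + x * u i` over `i < n`, in increasing order. -/
def incProd (u : ℕ → B) (x : B) : ℕ → B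
  | 0 => 1
  | n + 1 => incProd u x n * (1 + x * u n)

theorem incProd_commute {u : ℕ → B} {x y : B} (hx : ∀ z, z * x = x * z) (hy : ∀ z, z * y = y * z)
    (hfar : ∀ i j, i + 1 < j → u i * u j = u j * u i) {k n : ℕ} (hk : k < n) :
    (1 + y * u n) * incProd u x k = incProd u x k * (1 + y * u n) := by
  induction k with
  | zero => simp [incProd]
  | succ k ih =>
    have h1 : Commute (1 + y * u n) (1 + x * u k) := by
      refine (Commute.one_left _).add_left ((Commute.one_right _).add_right ?_)
      refine Commute.mul_left (hy _).symm (Commute.mul_right (hx _) ?_)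
      exact (hfar k n hk).symm
    exact (Commute.mul_right (ih (by omega)) h1).eq

theorem incProd_comm {u : ℕ → B} {x y : B} (hx : ∀ z, z * x = x * z) (hy : ∀ z, z * y = y * z)
    (hsq : ∀ i, u i * u i = 0) (hfar : ∀ i j, i + 1 < j → u i * u j = u j * u i)
    (hbr : ∀ i, u i * u (i + 1) * u i = u (i + 1) * u i * u (i + 1)) (n : ℕ) :
    incProd u x n * incProd u y n = incProd u y n * incProd u x n := by
  have hyx : ∀ z, z * (y - x) = (y - x) * z := fun z => by rw [mul_sub, sub_mul, hx, hy]
  have hnx : ∀ z, z * (-x) = (-x) * z := fun z => by rw [mul_neg, neg_mul, hx]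
  induction n using Nat.twoStepInduction with
  | zero => simp [incProd]
  | one =>
    simp only [incProd, one_mul]
    rw [nil_mul hy (hsq 0), nil_mul hx (hsq 0), add_comm x y]
  | more n _ ih =>
    have hcanc : ∀ i, (1 + -x * u i) * (1 + x * u i) = 1 := fun i => by
      rw [nil_mul hx (hsq i)]
      simp
    have hcanc' : ∀ i, (1 + x * u i) * (1 + -x * u i) = 1 := fun i => by
      rw [nil_mul hnx (hsq i)]
      simp
    have hadd : ∀ i, (1 + y * u i) * (1 + -x * u i) = 1 + (y - x) * u i := fun i => by
      rw [nil_mul hnx (hsq i), sub_eq_add_neg]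
    have hybe : (1 + x * u (n + 1)) * (1 + y * u n) * (1 + (y - x) * u (n + 1)) =
        (1 + (y - x) * u n) * (1 + y * u (n + 1)) * (1 + x * u n) := by
      have := yang_baxter hx hyx (hsq (n + 1)) (hsq n) (hbr n).symm
      rwa [add_sub_cancel] at this
    have key : incProd u x (n + 2) * incProd u y (n + 2) * (1 + -x * u (n + 1)) =
        incProd u y (n + 2) * incProd u x (n + 1) := by
      calc incProd u x (n + 2) * incProd u y (n + 2) * (1 + -x * u (n + 1))
          = incProd u x (n + 1) * ((1 + x * u (n + 1)) * incProd u y n) * (1 + y * u n) *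
              ((1 + y * u (n + 1)) * (1 + -x * u (n + 1))) := by
            simp only [incProd, mul_assoc]
        _ = incProd u x (n + 1) * incProd u y n *
              ((1 + x * u (n + 1)) * (1 + y * u n) * (1 + (y - x) * u (n + 1))) := by
            rw [incProd_commute hy hx hfar (Nat.lt_succ_self n), hadd]
            simp only [mul_assoc]
        _ = incProd u x (n + 1) * (incProd u y n * ((1 + y * u n) * (1 + -x * u n))) *
              ((1 + y * u (n + 1)) * (1 + x * u n)) := by
            rw [hybe, hadd]
            simp only [mul_assoc]
        _ = incProd u x (n + 1) * incProd u y (n + 1) * (1 + -x * u n) *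
              ((1 + y * u (n + 1)) * (1 + x * u n)) := by
            simp only [incProd, mul_assoc]
        _ = incProd u y (n + 1) * (incProd u x n * ((1 + x * u n) * (1 + -x * u n))) *
              ((1 + y * u (n + 1)) * (1 + x * u n)) := by
            rw [ih]
            simp only [incProd, mul_assoc]
        _ = incProd u y (n + 1) * (incProd u x n * (1 + y * u (n + 1))) * (1 + x * u n) := by
            rw [hcanc', mul_one]
            simp only [mul_assoc]
        _ = incProd u y (n + 2) * incProd u x (n + 1) := by
            rw [← incProd_commute hx hy hfar (Nat.lt_succ_self n)]
            simp only [incProd, mul_assoc]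
    calc incProd u x (n + 2) * incProd u y (n + 2)
        = incProd u x (n + 2) * incProd u y (n + 2) *
            ((1 + -x * u (n + 1)) * (1 + x * u (n + 1))) := by rw [hcanc, mul_one]
      _ = incProd u x (n + 2) * incProd u y (n + 2) * (1 + -x * u (n + 1)) *
            (1 + x * u (n + 1)) := by simp only [mul_assoc]
      _ = incProd u y (n + 2) * incProd u x (n + 2) := by
          rw [key]
          simp only [incProd, mul_assoc]

theorem incProd_map {B' : Type*} [Ring B'] (f : B →+* B') (u : ℕ → B) (x : B) (n : ℕ) :
    f (incProd u x n) = incProd (fun i => f (u i)) (f x) n := by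
  induction n with
  | zero => simp [incProd]
  | succ n ih => simp [incProd, ih]

open Polynomial in
theorem coeff_incProd_comm {u : ℕ → B} (hsq : ∀ i, u i * u i = 0)
    (hfar : ∀ i j, i + 1 < j → u i * u j = u j * u i)
    (hbr : ∀ i, u i * u (i + 1) * u i = u (i + 1) * u i * u (i + 1)) (n j k : ℕ) :
    (incProd (fun i => C (u i)) X n).coeff j * (incProd (fun i => C (u i)) X n).coeff k =
      (incProd (fun i => C (u i)) X n).coeff k * (incProd (fun i => C (u i)) X n).coeff j := by
  set p := incProd (fun i => C (u i)) X n with hp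
  have h1 : (C p : B[X][X]) = incProd (fun i => C (C (u i))) (C X) n := incProd_map C _ _ n
  have h2 : (p.map C : B[X][X]) = incProd (fun i => C (C (u i))) X n := by
    have := incProd_map (mapRingHom (C : B →+* B[X])) (fun i => C (u i)) X n
    simpa using this
  have h3 : (C p : B[X][X]) * p.map C = p.map C * C p := by
    rw [h1, h2]
    refine incProd_comm (fun z => ?_) (fun z => ?_) (fun i => ?_) (fun i j h => ?_) (fun i => ?_) n
    · ext k : 1
      rw [coeff_mul_C, coeff_C_mul, X_mul]
    · exact (X_mul).symm
    · rw [← C_mul, ← C_mul, hsq, C_0, C_0]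
    · rw [← C_mul, ← C_mul, hfar i j h, C_mul, C_mul]
    · simp only [← C_mul, hbr]
  have h4 := congrArg (fun q => (q.coeff k).coeff j) h3
  simpa [coeff_C_mul, coeff_mul_C, coeff_map] using h4

end NilCoxeter

/-- The strictly increasing words of length `k` in the letters `0, …, n - 1`. -/
def incWords : ℕ → ℕ → List (List ℕ)
  | _, 0 => [[]]
  | 0, _ + 1 => []
  | n + 1, k + 1 => incWords n (k + 1) ++ (incWords n k).map (· ++ [n])

theorem mem_incWords {n k : ℕ} {l : List ℕ} :
    l ∈ incWords n k ↔ l.length = k ∧ l.Pairwise (· < ·) ∧ ∀ x ∈ l, x < n := by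
  induction n generalizing k l with
  | zero =>
    cases k with
    | zero =>
      simp only [incWords, List.mem_singleton]
      refine ⟨fun h => by simp [h], fun h => List.length_eq_zero_iff.mp h.1⟩
    | succ k =>
      simp only [incWords, List.not_mem_nil, false_iff]
      rintro ⟨h1, -, h3⟩
      cases l with
      | nil => simp at h1
      | cons x l => exact Nat.not_lt_zero _ (h3 x List.mem_cons_self)
  | succ n ih =>
    cases k with
    | zero =>
      simp only [incWords, List.mem_singleton]
      refine ⟨fun h => by simp [h], fun h => List.length_eq_zero_iff.mp h.1⟩
    | succ k =>
      simp only [incWords, List.mem_append, List.mem_map, ih]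
      constructor
      · rintro (⟨h1, h2, h3⟩ | ⟨l, ⟨h1, h2, h3⟩, rfl⟩)
        · exact ⟨h1, h2, fun x hx => (h3 x hx).trans (Nat.lt_succ_self n)⟩
        · refine ⟨by simp [h1], List.pairwise_append.mpr ⟨h2, by simp, ?_⟩, fun x hx => ?_⟩
          · intro a ha b hb
            rw [List.mem_singleton] at hb
            exact hb ▸ h3 a ha
          · rcases List.mem_append.mp hx with hx | hx
            · exact (h3 x hx).trans (Nat.lt_succ_self n)
            · rw [List.mem_singleton] at hx
              omega
      · rintro ⟨h1, h2, h3⟩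
        rcases List.eq_nil_or_concat l with rfl | ⟨l, x, rfl⟩
        · simp at h1
        rw [List.concat_eq_append] at *
        rw [List.pairwise_append] at h2
        have hlt : ∀ a ∈ l, a < x := fun a ha => h2.2.2 a ha x (by simp)
        have hx : x < n + 1 := h3 x (by simp)
        by_cases hxn : x = n
        · subst hxn
          exact Or.inr ⟨l, ⟨by simpa using h1, h2.1, hlt⟩, rfl⟩
        · refine Or.inl ⟨h1, List.pairwise_append.mpr h2, fun a ha => ?_⟩
          rcases List.mem_append.mp ha with ha | ha
          · have := hlt a ha
            omega
          · rw [List.mem_singleton] at ha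
            omega

theorem nodup_incWords (n k : ℕ) : (incWords n k).Nodup := by
  induction n generalizing k with
  | zero => cases k <;> simp [incWords]
  | succ n ih =>
    cases k with
    | zero => simp [incWords]
    | succ k =>
      refine List.Nodup.append (ih _) ((ih _).map fun a b h => by simpa using h) ?_
      intro l h1 h2
      obtain ⟨l', -, rfl⟩ := List.mem_map.mp h2
      exact Nat.lt_irrefl _ ((mem_incWords.mp h1).2.2 n (by simp))

/-- The words in the letters `0, …, n - 1` that split into strictly increasing blocks of lengths
given by `β`. -/
def splitWords (n : ℕ) : List ℕ → List (List ℕ)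
  | [] => [[]]
  | k :: β => (incWords n k).flatMap fun l => (splitWords n β).map (l ++ ·)

theorem mem_splitWords_cons {n k : ℕ} {β l : List ℕ} :
    l ∈ splitWords n (k :: β) ↔ ∃ l₁ ∈ incWords n k, ∃ l₂ ∈ splitWords n β, l₁ ++ l₂ = l := by
  simp [splitWords]

theorem nodup_splitWords (n : ℕ) (β : List ℕ) : (splitWords n β).Nodup := by
  induction β with
  | nil => simp [splitWords]
  | cons k β ih =>
    rw [splitWords, List.nodup_flatMap]
    refine ⟨fun l _ => ih.map fun a b h => by simpa using h, ?_⟩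
    refine (nodup_incWords n k).imp_of_mem fun {a b} ha hb hab => ?_
    intro l h1 h2
    obtain ⟨l₁, -, h3⟩ := List.mem_map.mp h1
    obtain ⟨l₂, -, h4⟩ := List.mem_map.mp h2
    have := List.append_inj_left (h3.trans h4.symm)
      ((mem_incWords.mp ha).1.trans (mem_incWords.mp hb).1.symm)
    exact hab this

section

variable {B : Type*} [Ring B]

open Polynomial in
theorem coeff_incProd (u : ℕ → B) (n k : ℕ) :
    (incProd (fun i => C (u i)) X n).coeff k =
      ((incWords n k).map fun l => (l.map u).prod).sum := by
  induction n generalizing k with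
  | zero => cases k <;> simp [incProd, incWords, coeff_one]
  | succ n ih =>
    have hX : (X : B[X]) * C (u n) = C (u n) * X := X_mul
    cases k with
    | zero => simp [incProd, incWords, mul_add, hX, ← mul_assoc, ih]
    | succ k =>
      rw [incProd, mul_add, mul_one, hX, ← mul_assoc, coeff_add, coeff_mul_X, coeff_mul_C, ih, ih]
      simp only [incWords, List.map_append, List.sum_append, List.map_map, Function.comp_def,
        List.prod_append, List.map_cons, List.map_nil, List.prod_cons, List.prod_nil, mul_one]
      rw [List.sum_map_mul_right]

theorem sum_splitWords (u : ℕ → B) (n : ℕ) (β : List ℕ) :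
    ((splitWords n β).map fun l => (l.map u).prod).sum =
      (β.map fun k => ((incWords n k).map fun l => (l.map u).prod).sum).prod := by
  induction β with
  | nil => simp [splitWords]
  | cons k β ih =>
    rw [List.map_cons, List.prod_cons, ← ih, ← List.sum_map_mul_right, splitWords]
    induction incWords n k with
    | nil => simp
    | cons l L ih' =>
      rw [List.flatMap_cons, List.map_append, List.sum_append, ih', List.map_cons, List.sum_cons,
        ← List.sum_map_mul_left]
      simp [Function.comp_def]

theorem sum_splitWords_perm {u : ℕ → B} (hsq : ∀ i, u i * u i = 0)
    (hfar : ∀ i j, i + 1 < j → u i * u j = u j * u i)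
    (hbr : ∀ i, u i * u (i + 1) * u i = u (i + 1) * u i * u (i + 1)) (n : ℕ) {β β' : List ℕ}
    (h : β.Perm β') :
    ((splitWords n β).map fun l => (l.map u).prod).sum =
      ((splitWords n β').map fun l => (l.map u).prod).sum := by
  rw [sum_splitWords, sum_splitWords]
  refine (h.map _).prod_eq' ?_
  rw [List.pairwise_map]
  refine List.pairwise_of_forall fun j k => ?_
  have := coeff_incProd_comm hsq hfar hbr n j k
  rwa [coeff_incProd, coeff_incProd] at this

end

/-- The operator recording the descent `i`. -/
def descOp (i : ℕ) : Module.End ℤ (Equiv.Perm ℕ → ℤ) where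
  toFun f w := if w (i + 1) < w i then f (w * adjSwap i) else 0
  map_add' f g := by
    ext w
    simp only [Pi.add_apply]
    split_ifs <;> simp
  map_smul' c f := by
    ext w
    simp only [Pi.smul_apply]
    split_ifs <;> simp

theorem descOp_apply (i : ℕ) (f : Equiv.Perm ℕ → ℤ) (w : Equiv.Perm ℕ) :
    descOp i f w = if w (i + 1) < w i then f (w * adjSwap i) else 0 := rfl

theorem descOp_sq (i : ℕ) : descOp i * descOp i = 0 := by
  ext f w
  simp only [Module.End.mul_apply, descOp_apply, Equiv.Perm.mul_apply, adjSwap_apply,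
    LinearMap.zero_apply, Pi.zero_apply]
  grind

theorem descOp_far {i j : ℕ} (h : i + 1 < j) : descOp i * descOp j = descOp j * descOp i := by
  ext f w
  simp only [Module.End.mul_apply, descOp_apply, Equiv.Perm.mul_apply, adjSwap_apply, mul_assoc,
    adjSwap_comm h]
  grind

theorem descOp_braid (i : ℕ) :
    descOp i * descOp (i + 1) * descOp i = descOp (i + 1) * descOp i * descOp (i + 1) := by
  ext f w
  have := adjSwap_braid i
  simp only [mul_assoc] at this
  simp only [Module.End.mul_apply, descOp_apply, Equiv.Perm.mul_apply, adjSwap_apply, mul_assoc,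
    this]
  grind

theorem prod_descOp_apply (l : List ℕ) (w : Equiv.Perm ℕ) :
    (l.map descOp).prod (fun v => if v = 1 then 1 else 0) w = if Red w l then 1 else 0 := by
  induction l generalizing w with
  | nil =>
    simp only [List.map_nil, List.prod_nil, Module.End.one_apply, Red]
    congr
  | cons p l ih =>
    rw [List.map_cons, List.prod_cons, Module.End.mul_apply, descOp_apply, ih]
    by_cases h : w (p + 1) < w p <;> simp [Red, h]

theorem card_splitWords_perm (w : Equiv.Perm ℕ) (n : ℕ) {β β' : List ℕ} (h : β.Perm β') :
    ((redWords w).filter (· ∈ splitWords n β)).card =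
      ((redWords w).filter (· ∈ splitWords n β')).card := by
  have key : ∀ β, (((redWords w).filter (· ∈ splitWords n β)).card : ℤ) =
      ((splitWords n β).map fun l => (l.map descOp).prod).sum (fun v => if v = 1 then 1 else 0) w := by
    intro β
    have h1 : (redWords w).filter (· ∈ splitWords n β) =
        (splitWords n β).toFinset.filter (Red w) := by
      ext l
      simp [mem_redWords, and_comm]
    rw [h1, Finset.card_filter, Nat.cast_sum, List.sum_toFinset _ (nodup_splitWords n β)]
    generalize splitWords n β = W
    induction W with
    | nil => simp
    | cons l W ih =>
      rw [List.map_cons, List.sum_cons, ih, List.map_cons, List.sum_cons, LinearMap.add_apply,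
        Pi.add_apply, prod_descOp_apply]
      simp
  have := key β
  rw [sum_splitWords_perm descOp_sq (fun _ _ => descOp_far) descOp_braid n h, ← key β'] at this
  exact_mod_cast this

/-- The set of partial sums of a composition. -/
def partialSums (α : List ℕ) : Set ℕ := {c | ∃ k, (α.take k).sum = c}

theorem zero_mem_partialSums (α : List ℕ) : 0 ∈ partialSums α := ⟨0, by simp⟩

theorem sum_mem_partialSums (α : List ℕ) : α.sum ∈ partialSums α := ⟨α.length, by simp⟩

theorem mem_partialSums_nil {c : ℕ} : c ∈ partialSums [] ↔ c = 0 :=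
  ⟨fun ⟨k, hk⟩ => by simpa using hk.symm, fun h => h ▸ zero_mem_partialSums _⟩

theorem mem_partialSums_cons {a c : ℕ} {α : List ℕ} :
    c ∈ partialSums (a :: α) ↔ c = 0 ∨ a ≤ c ∧ c - a ∈ partialSums α := by
  constructor
  · rintro ⟨k, rfl⟩
    cases k with
    | zero => simp
    | succ k =>
      refine Or.inr ⟨by simp, k, ?_⟩
      rw [List.take_succ_cons, List.sum_cons, Nat.add_sub_cancel_left]
  · rintro (rfl | ⟨h, k, hk⟩)
    · exact zero_mem_partialSums _
    · refine ⟨k + 1, ?_⟩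
      rw [List.take_succ_cons, List.sum_cons, hk]
      omega

theorem mem_partialSums_append {c : ℕ} {α β : List ℕ} :
    c ∈ partialSums (α ++ β) ↔ c ∈ partialSums α ∨ α.sum ≤ c ∧ c - α.sum ∈ partialSums β := by
  induction α generalizing c with
  | nil =>
    simp only [List.nil_append, List.sum_nil, Nat.zero_le, true_and, Nat.sub_zero,
      mem_partialSums_nil]
    exact ⟨Or.inr, fun h => h.elim (fun h => h ▸ zero_mem_partialSums β) id⟩
  | cons a α ih =>
    rw [List.cons_append, mem_partialSums_cons, mem_partialSums_cons, ih, List.sum_cons,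
      Nat.sub_sub]
    constructor
    · rintro (h | ⟨h1, h | ⟨h2, h3⟩⟩)
      · exact Or.inl (Or.inl h)
      · exact Or.inl (Or.inr ⟨h1, h⟩)
      · exact Or.inr ⟨by omega, h3⟩
    · rintro ((h | ⟨h1, h⟩) | ⟨h1, h⟩)
      · exact Or.inl h
      · exact Or.inr ⟨h1, Or.inl h⟩
      · exact Or.inr ⟨by omega, Or.inr ⟨by omega, h⟩⟩

theorem le_sum_of_mem_partialSums {c : ℕ} {α : List ℕ} (h : c ∈ partialSums α) : c ≤ α.sum := by
  induction α generalizing c with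
  | nil => simp [mem_partialSums_nil.mp h]
  | cons a α ih =>
    rcases mem_partialSums_cons.mp h with rfl | ⟨h1, h2⟩
    · exact Nat.zero_le _
    · have := ih h2
      rw [List.sum_cons]
      omega

theorem mem_partialSums_reverse {c : ℕ} {α : List ℕ} :
    c ∈ partialSums α.reverse ↔ c ≤ α.sum ∧ α.sum - c ∈ partialSums α := by
  induction α generalizing c with
  | nil =>
    simp only [List.reverse_nil, mem_partialSums_nil, List.sum_nil]
    omega
  | cons a α ih =>
    rw [List.reverse_cons, mem_partialSums_append, ih, List.sum_reverse, List.sum_cons,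
      mem_partialSums_cons, mem_partialSums_cons, mem_partialSums_nil]
    constructor
    · rintro (⟨h1, h2⟩ | ⟨h1, h | ⟨h2, h3⟩⟩)
      · refine ⟨by omega, Or.inr ⟨by omega, ?_⟩⟩
        rwa [show a + α.sum - c - a = α.sum - c by omega]
      · refine ⟨by omega, Or.inr ⟨by omega, ?_⟩⟩
        rw [show a + α.sum - c - a = 0 by omega]
        exact zero_mem_partialSums _
      · exact ⟨by omega, Or.inl (by omega)⟩
    · rintro ⟨h1, h | ⟨h2, h3⟩⟩
      · exact Or.inr ⟨by omega, Or.inr ⟨by omega, by omega⟩⟩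
      · refine Or.inl ⟨by omega, ?_⟩
        rwa [show a + α.sum - c - a = α.sum - c by omega] at h3

theorem refines_nil {β : List ℕ} : Refines β [] ↔ β = [] := by
  constructor
  · rintro ⟨L, rfl, h⟩
    rw [List.map_eq_nil_iff] at h
    rw [h, List.flatten_nil]
  · rintro rfl
    exact ⟨[], rfl, rfl⟩

theorem refines_cons {a : ℕ} {α β : List ℕ} :
    Refines β (a :: α) ↔ ∃ β₁ β₂, β₁ ++ β₂ = β ∧ β₁.sum = a ∧ Refines β₂ α := by
  constructor
  · rintro ⟨L, rfl, h⟩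
    cases L with
    | nil => simp at h
    | cons x L =>
      rw [List.map_cons, List.cons.injEq] at h
      exact ⟨x, L.flatten, by simp, h.1, L, rfl, h.2⟩
  · rintro ⟨β₁, β₂, rfl, rfl, L, rfl, rfl⟩
    exact ⟨β₁ :: L, by simp, by simp⟩

theorem refines_iff {α β : List ℕ} (hβ : ∀ x ∈ β, 0 < x) :
    Refines β α ↔ β.sum = α.sum ∧ partialSums α ⊆ partialSums β := by
  induction α generalizing β with
  | nil =>
    rw [refines_nil]
    constructor
    · rintro rfl
      exact ⟨rfl, subset_rfl⟩
    · rintro ⟨h, -⟩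
      cases β with
      | nil => rfl
      | cons x β =>
        have := hβ x List.mem_cons_self
        simp only [List.sum_cons, List.sum_nil] at h
        omega
  | cons a α ih =>
    rw [refines_cons]
    constructor
    · rintro ⟨β₁, β₂, rfl, rfl, h⟩
      obtain ⟨h1, h2⟩ := (ih fun x hx => hβ x (List.mem_append_right _ hx)).mp h
      refine ⟨by rw [List.sum_append, List.sum_cons, h1], fun c hc => ?_⟩
      rw [mem_partialSums_append]
      rcases mem_partialSums_cons.mp hc with rfl | ⟨h3, h4⟩
      · exact Or.inl (zero_mem_partialSums _)
      · exact Or.inr ⟨h3, h2 h4⟩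
    · rintro ⟨h1, h2⟩
      obtain ⟨k, hk⟩ := h2 (mem_partialSums_cons.mpr
        (Or.inr ⟨le_rfl, by rw [Nat.sub_self]; exact zero_mem_partialSums α⟩) :
          a ∈ partialSums (a :: α))
      refine ⟨β.take k, β.drop k, List.take_append_drop k β, hk,
        (ih fun x hx => hβ x (List.mem_of_mem_drop hx)).mpr ⟨?_, fun c hc => ?_⟩⟩
      · have := congrArg List.sum (List.take_append_drop k β)
        rw [List.sum_append, hk, h1, List.sum_cons] at this
        omega
      · have h3 : a + c ∈ partialSums β := h2 (mem_partialSums_cons.mpr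
          (Or.inr ⟨by omega, by rwa [Nat.add_sub_cancel_left]⟩))
        rw [← List.take_append_drop k β, mem_partialSums_append, hk] at h3
        rcases h3 with h3 | ⟨-, h3⟩
        · have := le_sum_of_mem_partialSums h3
          rw [hk] at this
          rw [show c = 0 by omega]
          exact zero_mem_partialSums _
        · rwa [Nat.add_sub_cancel_left] at h3

/-- The set of positions at which consecutive entries of a list are related by `R`. -/
def breaks {A : Type*} (R : A → A → Prop) (l : List A) : Set ℕ :=
  {c | ∃ k x y, l[k]? = some x ∧ l[k + 1]? = some y ∧ R x y ∧ c = k + 1}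

theorem breaks_nil {A : Type*} (R : A → A → Prop) : breaks R [] = ∅ := by
  ext c
  simp [breaks]

theorem breaks_singleton {A : Type*} (R : A → A → Prop) (x : A) : breaks R [x] = ∅ := by
  ext c
  simp [breaks]

theorem breaks_cons_cons {A : Type*} (R : A → A → Prop) (x y : A) (l : List A) (c : ℕ) :
    c ∈ breaks R (x :: y :: l) ↔ c = 1 ∧ R x y ∨ 1 ≤ c ∧ c - 1 ∈ breaks R (y :: l) := by
  constructor
  · rintro ⟨k, a, b, h1, h2, h3, rfl⟩
    cases k with
    | zero =>
      simp only [List.getElem?_cons_zero, Option.some.injEq, List.getElem?_cons_succ] at h1 h2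
      subst h1 h2
      exact Or.inl ⟨rfl, h3⟩
    | succ k =>
      rw [List.getElem?_cons_succ] at h1 h2
      exact Or.inr ⟨by omega, k, a, b, h1, h2, h3, rfl⟩
  · rintro (⟨rfl, h⟩ | ⟨h, k, a, b, h1, h2, h3, h4⟩)
    · exact ⟨0, x, y, rfl, rfl, h, rfl⟩
    · exact ⟨k + 1, a, b, h1, h2, h3, by omega⟩

theorem breaks_lt {A : Type*} {R : A → A → Prop} {l : List A} {c : ℕ} (h : c ∈ breaks R l) :
    0 < c ∧ c < l.length := by
  obtain ⟨k, a, b, h1, h2, h3, rfl⟩ := h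
  obtain ⟨h4, -⟩ := List.getElem?_eq_some_iff.mp h2
  exact ⟨by omega, h4⟩

theorem mem_splitWords_iff {n : ℕ} {β l : List ℕ} (hl : ∀ x ∈ l, x < n) :
    l ∈ splitWords n β ↔ β.sum = l.length ∧ breaks (· ≥ ·) l ⊆ partialSums β := by
  induction β generalizing l with
  | nil =>
    simp only [splitWords, List.mem_singleton, List.sum_nil]
    constructor
    · rintro rfl
      exact ⟨rfl, by simp [breaks_nil]⟩
    · exact fun h => List.length_eq_zero_iff.mp h.1.symm
  | cons b β ih =>
    rw [mem_splitWords_cons]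
    constructor
    · rintro ⟨l₁, h1, l₂, h2, rfl⟩
      obtain ⟨rfl, h4, h5⟩ := mem_incWords.mp h1
      obtain ⟨h6, h7⟩ := (ih fun x hx => hl x (List.mem_append_right _ hx)).mp h2
      refine ⟨by rw [List.sum_cons, h6, List.length_append], ?_⟩
      rintro c ⟨k, x, y, h8, h9, h10, rfl⟩
      rw [mem_partialSums_cons]
      rcases lt_trichotomy (k + 1) l₁.length with h | h | h
      · rw [List.getElem?_append_left (by omega)] at h8 h9
        obtain ⟨h11, rfl⟩ := List.getElem?_eq_some_iff.mp h8
        obtain ⟨h12, rfl⟩ := List.getElem?_eq_some_iff.mp h9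
        have := List.pairwise_iff_getElem.mp h4 k (k + 1) h11 h12 (by omega)
        omega
      · refine Or.inr ⟨h.ge, ?_⟩
        rw [h, Nat.sub_self]
        exact zero_mem_partialSums _
      · rw [List.getElem?_append_right (by omega)] at h8 h9
        refine Or.inr ⟨by omega, h7 ⟨k - l₁.length, x, y, h8, ?_, h10, by omega⟩⟩
        rwa [show k + 1 - l₁.length = k - l₁.length + 1 by omega] at h9
    · rintro ⟨h1, h2⟩
      rw [List.sum_cons] at h1
      refine ⟨l.take b, mem_incWords.mpr ⟨?_, ?_, ?_⟩, l.drop b, ?_, List.take_append_drop b l⟩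
      · rw [List.length_take]
        omega
      · rw [← List.isChain_iff_pairwise, List.isChain_iff_getElem]
        intro k hk
        rw [List.length_take] at hk
        rw [List.getElem_take, List.getElem_take]
        by_contra hc
        have := h2 ⟨k, l[k], l[k + 1], List.getElem?_eq_getElem _, List.getElem?_eq_getElem _,
          not_lt.mp hc, rfl⟩
        rcases mem_partialSums_cons.mp this with h3 | ⟨h3, -⟩ <;> omega
      · exact fun x hx => hl x (List.mem_of_mem_take hx)
      · refine (ih fun x hx => hl x (List.mem_of_mem_drop hx)).mpr ⟨?_, ?_⟩
        · rw [List.length_drop]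
          omega
        · rintro c ⟨k, x, y, h8, h9, h10, rfl⟩
          rw [List.getElem?_drop] at h8 h9
          have := h2 ⟨b + k, x, y, h8, h9, h10, rfl⟩
          rcases mem_partialSums_cons.mp this with h3 | ⟨-, h3⟩
          · omega
          · rwa [show b + k + 1 - b = k + 1 by omega] at h3

theorem runsStrict_cons (y : ℕ) (l : List ℕ) : ∃ r R, runsStrict (y :: l) = (y :: r) :: R := by
  induction l generalizing y with
  | nil => exact ⟨[], [], rfl⟩
  | cons z l ih =>
    obtain ⟨r, R, h⟩ := ih z
    simp only [runsStrict] at h ⊢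
    rw [h]
    by_cases hyz : y < z
    · exact ⟨z :: r, R, by simp [hyz]⟩
    · exact ⟨[], (z :: r) :: R, by simp [hyz]⟩

theorem desStrict_cons_cons (x y : ℕ) (l : List ℕ) :
    ∃ d D, 1 ≤ d ∧ desStrict (y :: l) = d :: D ∧
      desStrict (x :: y :: l) = if x < y then (d + 1) :: D else 1 :: d :: D := by
  obtain ⟨r, R, h⟩ := runsStrict_cons y l
  refine ⟨r.length + 1, R.map List.length, by omega, by simp [desStrict, h], ?_⟩
  have h' : runsStrict (x :: y :: l) =
      if x < y then (x :: y :: r) :: R else [x] :: (y :: r) :: R := by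
    simp only [runsStrict] at h ⊢
    rw [h]
  rw [desStrict, h']
  split_ifs <;> simp

theorem sum_desStrict (l : List ℕ) : (desStrict l).sum = l.length := by
  induction l with
  | nil => rfl
  | cons x l ih =>
    cases l with
    | nil => rfl
    | cons y l =>
      obtain ⟨d, D, hd, h1, h2⟩ := desStrict_cons_cons x y l
      rw [h1] at ih
      rw [h2]
      split_ifs <;> simp only [List.sum_cons, List.length_cons] at ih ⊢ <;> omega

theorem mem_partialSums_desStrict (l : List ℕ) (c : ℕ) :
    c ∈ partialSums (desStrict l) ↔ c = 0 ∨ c = l.length ∨ c ∈ breaks (· ≥ ·) l := by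
  induction l generalizing c with
  | nil =>
    rw [show desStrict [] = [] from rfl, mem_partialSums_nil, breaks_nil]
    simp
  | cons x l ih =>
    cases l with
    | nil =>
      rw [show desStrict [x] = [1] from rfl, mem_partialSums_cons, mem_partialSums_nil,
        breaks_singleton]
      simp only [List.length_cons, List.length_nil, Set.mem_empty_iff_false, or_false]
      omega
    | cons y l =>
      obtain ⟨d, D, hd, h1, h2⟩ := desStrict_cons_cons x y l
      have ih' := ih (c - 1)
      rw [h1] at ih'
      rw [h2, breaks_cons_cons]
      have hlt : c - 1 ∈ breaks (· ≥ ·) (y :: l) → 0 < c - 1 := fun h => (breaks_lt h).1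
      have h0 : 0 ∈ partialSums (d :: D) := zero_mem_partialSums _
      simp only [List.length_cons] at ih' ⊢
      split_ifs with hxy
      · rw [mem_partialSums_cons] at ih' ⊢
        rw [Nat.sub_sub, Nat.add_comm 1 d] at ih'
        have : ¬ x ≥ y := by omega
        simp only [this, and_false, false_or]
        grind
      · rw [mem_partialSums_cons, ih']
        have : x ≥ y := by omega
        simp only [this, and_true]
        grind

/-- The nonzero values of a finitely supported function, in order. -/
noncomputable def flatFinsupp (d : ℕ →₀ ℕ) : List ℕ := (d.support.sort (· ≤ ·)).map d

theorem flatFinsupp_pos (d : ℕ →₀ ℕ) : ∀ x ∈ flatFinsupp d, 0 < x := by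
  intro x hx
  obtain ⟨i, hi, rfl⟩ := List.mem_map.mp hx
  rw [Finset.mem_sort, Finsupp.mem_support_iff] at hi
  exact Nat.pos_of_ne_zero hi

theorem exists_place_iff {α : List ℕ} (hα : ∀ x ∈ α, 0 < x) (d : ℕ →₀ ℕ) :
    (∃ i : Fin α.length → ℕ, StrictMono i ∧
      d = ∑ t : Fin α.length, Finsupp.single (i t) (α.get t)) ↔ α = flatFinsupp d := by
  constructor
  · rintro ⟨i, hi, rfl⟩
    set d := ∑ t : Fin α.length, Finsupp.single (i t) (α.get t) with hd
    have hdi : ∀ t, d (i t) = α.get t := by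
      intro t
      rw [hd, Finsupp.finsetSum_apply, Finset.sum_eq_single t]
      · simp
      · intro s _ hst
        rw [Finsupp.single_apply, if_neg fun h => hst (hi.injective h)]
      · simp
    have hsupp : d.support = (List.ofFn i).toFinset := by
      ext k
      rw [Finsupp.mem_support_iff, List.mem_toFinset, List.mem_ofFn]
      constructor
      · intro hk
        by_contra hc
        apply hk
        rw [hd, Finsupp.finsetSum_apply]
        refine Finset.sum_eq_zero fun t _ => ?_
        rw [Finsupp.single_apply, if_neg fun h => hc ⟨t, h⟩]
      · rintro ⟨t, rfl⟩
        rw [hdi]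
        exact (hα _ (List.get_mem _ _)).ne'
    have hsort : d.support.sort (· ≤ ·) = List.ofFn i := by
      rw [hsupp]
      exact (List.toFinset_sort (· ≤ ·) (List.nodup_ofFn.mpr hi.injective)).mpr
        (List.pairwise_ofFn.mpr fun s t hst => (hi hst).le)
    rw [flatFinsupp, hsort, List.map_ofFn]
    have : ⇑d ∘ i = α.get := funext hdi
    rw [this, List.ofFn_get]
  · intro h
    have hlen : α.length = (d.support.sort (· ≤ ·)).length := by
      rw [h, flatFinsupp, List.length_map]
    refine ⟨fun t => (d.support.sort (· ≤ ·))[(t : ℕ)]'(hlen ▸ t.2), fun s t hst => ?_, ?_⟩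
    · exact List.pairwise_iff_getElem.mp (Finset.sortedLT_sort d.support).pairwise _ _ _ _ hst
    · have h1 : ∀ t : Fin α.length,
          Finsupp.single ((d.support.sort (· ≤ ·))[(t : ℕ)]'(hlen ▸ t.2)) (α.get t) =
            ((d.support.sort (· ≤ ·)).map fun s => Finsupp.single s (d s))[(t : ℕ)]'(by
              rw [List.length_map]; exact hlen ▸ t.2) := by
        intro t
        rw [List.getElem_map]
        congr 1
        have : α[(t : ℕ)]? = (flatFinsupp d)[(t : ℕ)]? := by rw [← h]
        rw [flatFinsupp, List.getElem?_map, List.getElem?_eq_getElem t.2,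
          List.getElem?_eq_getElem (hlen ▸ t.2)] at this
        simpa using this
      rw [Finset.sum_congr rfl fun t _ => h1 t]
      have h2 : ((d.support.sort (· ≤ ·)).map fun s => Finsupp.single s (d s)).sum = d := by
        rw [← List.sum_toFinset _ (Finset.sort_nodup _ _), Finset.sort_toFinset]
        exact Finsupp.sum_single d
      conv_lhs => rw [← h2]
      rw [← List.sum_ofFn]
      congr 1
      exact List.ext_getElem (by simp [hlen]) fun k _ _ => by simp

theorem coeff_FqsFun (α : List ℕ) (d : ℕ →₀ ℕ) :
    MvPowerSeries.coeff d (FqsFun α) = if Refines (flatFinsupp d) α then 1 else 0 := by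
  have h1 : ∀ c : Composition α.sum, MvPowerSeries.coeff d (MqsFun c.blocks) =
      if c.blocks = flatFinsupp d then (1 : ℤ) else 0 := fun c =>
    if_congr (exists_place_iff (fun x hx => c.blocks_pos hx) d) rfl rfl
  rw [FqsFun, map_sum, Finset.sum_congr rfl fun c _ => h1 c]
  split_ifs with h
  · have hs := ((refines_iff (flatFinsupp_pos d)).mp h).1
    rw [Finset.sum_eq_single (⟨flatFinsupp d, fun hx => flatFinsupp_pos d _ hx, hs⟩ :
      Composition α.sum)]
    · simp
    · intro c _ hc
      rw [if_neg fun h2 => hc (Composition.ext h2)]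
    · intro hc
      exact (hc (Finset.mem_filter.mpr ⟨Finset.mem_univ (α := Composition α.sum) _, h⟩)).elim
  · refine Finset.sum_eq_zero fun c hc => ?_
    rw [Finset.mem_filter] at hc
    have hne : ¬ c.blocks = flatFinsupp d := fun h2 => h (h2 ▸ hc.2)
    exact if_neg hne

theorem stanleySym_eq (w : Equiv.Perm ℕ) :
    StanleySym w = ∑ l ∈ redWords w, FqsFun (desStrict l) := by
  rw [StanleySym, ← finsum_mem_coe_finset]
  congr! 3 with l
  simp [mem_redWords, red_iff]

theorem card_refines_desStrict (w : Equiv.Perm ℕ) {β β' : List ℕ} (hβ : ∀ x ∈ β, 0 < x)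
    (h : β.Perm β') :
    ((redWords w).filter fun l => Refines β (desStrict l)).card =
      ((redWords w).filter fun l => Refines β' (desStrict l)).card := by
  obtain ⟨n, hn⟩ : ∃ n, ∀ l ∈ redWords w, ∀ x ∈ l, x < n := by
    refine ⟨(redWords w).sup (fun l => l.sum) + 1, fun l hl x hx => ?_⟩
    have h1 : x ≤ l.sum := List.single_le_sum (fun _ _ => Nat.zero_le _) x hx
    have h2 := Finset.le_sup (f := fun l : List ℕ => l.sum) hl
    omega
  have key : ∀ β : List ℕ, (∀ x ∈ β, 0 < x) →
      (redWords w).filter (fun l => Refines β (desStrict l)) =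
        (redWords w).filter (· ∈ splitWords n β) := by
    intro β hβ
    refine Finset.filter_congr fun l hl => ?_
    rw [refines_iff hβ, sum_desStrict, mem_splitWords_iff (hn l hl)]
    refine and_congr_right fun hs => ⟨fun h c hc => h ?_, fun h c hc => ?_⟩
    · exact (mem_partialSums_desStrict l c).mpr (Or.inr (Or.inr hc))
    · rcases (mem_partialSums_desStrict l c).mp hc with rfl | rfl | hc
      · exact zero_mem_partialSums _
      · exact hs ▸ sum_mem_partialSums _
      · exact h hc
  rw [key β hβ, key β' fun x hx => hβ x (h.mem_iff.mpr hx)]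
  exact card_splitWords_perm w n h

/-- If each `α l` has, up to reversal, the partial sums of the descent composition of `l`, then
the `α l` compute the Stanley symmetric function. -/
theorem stanleySym_eq_of_reverse (w : Equiv.Perm ℕ) (α : List ℕ → List ℕ)
    (hα : ∀ l ∈ redWords w, (α l).sum = l.length ∧ ∀ c, c ∈ partialSums (α l) ↔
      c ≤ l.length ∧ l.length - c ∈ partialSums (desStrict l)) :
    StanleySym w = ∑ l ∈ redWords w, FqsFun (α l) := by
  rw [stanleySym_eq]
  ext d
  simp only [map_sum, coeff_FqsFun, Finset.sum_boole]
  set β := flatFinsupp d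
  have hβ : ∀ x ∈ β, 0 < x := flatFinsupp_pos d
  rw [card_refines_desStrict w hβ β.reverse_perm.symm]
  congr 2
  refine Finset.filter_congr fun l hl => ?_
  obtain ⟨h1, h2⟩ := hα l hl
  rw [refines_iff (by simpa using hβ), refines_iff hβ, List.sum_reverse, sum_desStrict, h1]
  refine and_congr_right fun hs => ⟨fun h c hc => ?_, fun h c hc => ?_⟩
  · obtain ⟨h3, h4⟩ := (h2 c).mp hc
    obtain ⟨-, h5⟩ := mem_partialSums_reverse.mp (h h4)
    rwa [hs, show l.length - (l.length - c) = c by omega] at h5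
  · have hle := le_sum_of_mem_partialSums hc
    rw [sum_desStrict] at hle
    rw [mem_partialSums_reverse, hs]
    refine ⟨hle, h ((h2 _).mpr ⟨by omega, ?_⟩)⟩
    rwa [show l.length - (l.length - c) = c by omega]

/-- The weak composition of length `n` counting the entries of a list of rows shifted by `m`. -/
def wtZ (m n : ℕ) (r : List ℤ) : Fin n → ℕ := fun i => r.count ((i : ℤ) - m)

/-- A weakly decreasing list of rows that become `0, …, n - 1` after shifting by `m`. -/
structure RowList (m n : ℕ) (r : List ℤ) : Prop where
  sorted : r.Pairwise (· ≥ ·)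
  lower : ∀ x ∈ r, -(m : ℤ) ≤ x
  upper : ∀ x ∈ r, x < (n : ℤ) - m

theorem psum_succ {n : ℕ} (a : Fin n → ℕ) {j : ℕ} (hj : j < n) :
    psum a (j + 1) = psum a j + a ⟨j, hj⟩ := by
  have : (Finset.univ.filter fun i : Fin n => (i : ℕ) < j + 1) =
      insert ⟨j, hj⟩ (Finset.univ.filter fun i : Fin n => (i : ℕ) < j) := by
    ext i
    simp only [Finset.mem_filter, Finset.mem_univ, true_and, Finset.mem_insert, Fin.ext_iff]
    omega
  rw [psum, this, Finset.sum_insert (by simp), add_comm]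
  rfl

theorem psum_zero {n : ℕ} (a : Fin n → ℕ) : psum a 0 = 0 := by simp [psum]

theorem psum_of_le {n : ℕ} (a : Fin n → ℕ) {j : ℕ} (hj : n ≤ j) : psum a j = ∑ i, a i := by
  rw [psum, Finset.filter_true_of_mem fun i _ => by omega]

theorem countP_lt_succ (r : List ℤ) (t : ℤ) :
    r.countP (fun x => decide (x < t + 1)) = r.countP (fun x => decide (x < t)) + r.count t := by
  induction r with
  | nil => rfl
  | cons x r ih =>
    simp only [List.countP_cons, List.count_cons, ih, beq_iff_eq, decide_eq_true_eq]
    split_ifs <;> omega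

theorem RowList.psum_eq {m n : ℕ} {r : List ℤ} (h : RowList m n r) {j : ℕ} (hj : j ≤ n) :
    psum (wtZ m n r) j = r.countP fun x => decide (x < (j : ℤ) - m) := by
  induction j with
  | zero =>
    rw [psum_zero, eq_comm, List.countP_eq_zero]
    intro x hx
    have := h.lower x hx
    simpa using this
  | succ j ih =>
    rw [psum_succ _ hj, ih (by omega), Nat.cast_succ, add_sub_right_comm, countP_lt_succ]
    rfl

theorem RowList.sum_eq {m n : ℕ} {r : List ℤ} (h : RowList m n r) :
    ∑ i, wtZ m n r i = r.length := by
  rw [← psum_of_le _ le_rfl, h.psum_eq le_rfl, List.countP_eq_length]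
  intro x hx
  simpa using h.upper x hx

theorem getElem_lt_iff {r : List ℤ} (h : r.Pairwise (· ≥ ·)) {k : ℕ} (hk : k < r.length) (t : ℤ) :
    r[k] < t ↔ r.length ≤ k + r.countP fun x => decide (x < t) := by
  induction r generalizing k with
  | nil => simp at hk
  | cons x r ih =>
    rw [List.pairwise_cons] at h
    have hle : r.countP (fun x => decide (x < t)) ≤ r.length := List.countP_le_length
    rw [List.countP_cons, List.length_cons]
    simp only [decide_eq_true_eq]
    cases k with
    | zero =>
      rw [List.getElem_cons_zero]
      by_cases hx : x < t
      · have : r.countP (fun x => decide (x < t)) = r.length := by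
          rw [List.countP_eq_length]
          intro y hy
          have := h.1 y hy
          rw [decide_eq_true_eq]
          omega
        simp only [hx, if_true, true_iff]
        omega
      · simp only [hx, if_false, false_iff]
        omega
    | succ k =>
      have hk' : k < r.length := by simpa using hk
      rw [List.getElem_cons_succ, ih h.2 hk']
      by_cases hx : x < t
      · have : r.countP (fun x => decide (x < t)) = r.length := by
          rw [List.countP_eq_length]
          intro y hy
          have := h.1 y hy
          rw [decide_eq_true_eq]
          omega
        simp only [hx, if_true]
        omega
      · simp only [hx, if_false]
        omega

theorem RowList.exists_psum_iff {m n : ℕ} {r : List ℤ} (h : RowList m n r) (c : ℕ) :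
    (∃ j ≤ n, psum (wtZ m n r) j = c) ↔
      c ≤ r.length ∧ (c = 0 ∨ c = r.length ∨ r.length - c ∈ breaks (· > ·) r) := by
  constructor
  · rintro ⟨j, hj, rfl⟩
    rw [h.psum_eq hj]
    set c := r.countP fun x => decide (x < (j : ℤ) - m) with hc
    have hle : c ≤ r.length := List.countP_le_length
    refine ⟨hle, ?_⟩
    by_cases h0 : c = 0
    · exact Or.inl h0
    by_cases h1 : c = r.length
    · exact Or.inr (Or.inl h1)
    have hk : r.length - c - 1 < r.length := by omega
    have hk1 : r.length - c - 1 + 1 < r.length := by omega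
    refine Or.inr (Or.inr ⟨r.length - c - 1, r[r.length - c - 1], r[r.length - c - 1 + 1],
      List.getElem?_eq_getElem _, List.getElem?_eq_getElem _, ?_, by omega⟩)
    have h2 := getElem_lt_iff h.sorted hk ((j : ℤ) - m)
    have h3 := getElem_lt_iff h.sorted hk1 ((j : ℤ) - m)
    rw [← hc] at h2 h3
    have h4 : ¬ r[r.length - c - 1] < (j : ℤ) - m := by
      rw [h2]
      omega
    have h5 : r[r.length - c - 1 + 1] < (j : ℤ) - m := by
      rw [h3]
      omega
    exact lt_of_lt_of_le h5 (not_lt.mp h4)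
  · rintro ⟨hle, h0 | h0 | h0⟩
    · exact ⟨0, Nat.zero_le _, by rw [psum_zero, h0]⟩
    · exact ⟨n, le_rfl, by rw [psum_of_le _ le_rfl, h.sum_eq, h0]⟩
    · obtain ⟨k, x, y, h1, h2, h3, h4⟩ := h0
      obtain ⟨hk, rfl⟩ := List.getElem?_eq_some_iff.mp h1
      obtain ⟨hk1, rfl⟩ := List.getElem?_eq_some_iff.mp h2
      have hl := h.lower _ (List.getElem_mem hk)
      have hu := h.upper _ (List.getElem_mem hk)
      refine ⟨(r[k] + m).toNat, by omega, ?_⟩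
      rw [h.psum_eq (by omega), show (((r[k] + m).toNat : ℕ) : ℤ) - m = r[k] by omega]
      have h5 := getElem_lt_iff h.sorted hk r[k]
      have h6 := (getElem_lt_iff h.sorted hk1 r[k]).mp h3
      have h7 : ¬ r.length ≤ k + _ := fun hc => lt_irrefl _ (h5.mpr hc)
      omega

theorem mem_partialSums_filter {α : List ℕ} {c : ℕ} :
    c ∈ partialSums (α.filter fun x => x ≠ 0) ↔ c ∈ partialSums α := by
  induction α generalizing c with
  | nil => rfl
  | cons a α ih =>
    rw [List.filter_cons, mem_partialSums_cons]
    by_cases ha : a = 0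
    · rw [if_neg (by simpa using ha), ih, ha, Nat.sub_zero]
      exact ⟨fun h => Or.inr ⟨Nat.zero_le _, h⟩, fun h => h.elim
        (fun h => h ▸ zero_mem_partialSums _) And.right⟩
    · rw [if_pos (by simpa using ha), mem_partialSums_cons, ih]

theorem sum_take_ofFn {n : ℕ} (a : Fin n → ℕ) (j : ℕ) :
    ((List.ofFn a).take j).sum = psum a j := by
  induction j with
  | zero => simp [psum_zero]
  | succ j ih =>
    by_cases hj : j < n
    · rw [List.take_add_one, List.sum_append, ih, psum_succ a hj]
      simp [hj]
    · rw [List.take_of_length_le (by simp; omega), psum_of_le a (by omega), List.sum_ofFn]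

theorem mem_partialSums_flat {n : ℕ} {a : Fin n → ℕ} {c : ℕ} :
    c ∈ partialSums (flat a) ↔ ∃ j ≤ n, psum a j = c := by
  rw [flat, mem_partialSums_filter]
  constructor
  · rintro ⟨j, rfl⟩
    rcases le_total j n with hj | hj
    · exact ⟨j, hj, (sum_take_ofFn a j).symm⟩
    · refine ⟨n, le_rfl, ?_⟩
      rw [sum_take_ofFn, psum_of_le a le_rfl, psum_of_le a hj]
  · rintro ⟨j, -, rfl⟩
    exact ⟨j, sum_take_ofFn a j⟩

theorem sum_flat {n : ℕ} (a : Fin n → ℕ) : (flat a).sum = ∑ i, a i := by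
  rw [flat, ← List.sum_ofFn]
  induction List.ofFn a with
  | nil => rfl
  | cons x l ih =>
    rw [List.filter_cons]
    by_cases hx : x = 0
    · rw [if_neg (by simpa using hx), ih, hx, List.sum_cons, zero_add]
    · rw [if_pos (by simpa using hx), List.sum_cons, List.sum_cons, ih]

theorem flat_pos {n : ℕ} (a : Fin n → ℕ) : ∀ x ∈ flat a, 0 < x := by
  intro x hx
  rw [flat, List.mem_filter] at hx
  simpa [Nat.pos_iff_ne_zero] using hx.2

theorem RowList.refines_iff {m n : ℕ} {r s : List ℤ} (hr : RowList m n r) (hs : RowList m n s)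
    (hlen : r.length = s.length) :
    Refines (flat (wtZ m n r)) (flat (wtZ m n s)) ↔ breaks (· > ·) s ⊆ breaks (· > ·) r := by
  rw [SlidePaper.refines_iff (flat_pos _), sum_flat, sum_flat, hr.sum_eq, hs.sum_eq]
  simp only [hlen, true_and]
  constructor
  · intro h c hc
    have hlt := breaks_lt hc
    have h1 : s.length - c ∈ partialSums (flat (wtZ m n s)) := by
      rw [mem_partialSums_flat, hs.exists_psum_iff]
      refine ⟨by omega, Or.inr (Or.inr ?_)⟩
      rwa [show s.length - (s.length - c) = c by omega]
    have h2 := h h1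
    rw [mem_partialSums_flat, hr.exists_psum_iff, hlen] at h2
    obtain ⟨-, h2 | h2 | h2⟩ := h2
    · omega
    · omega
    · rwa [show s.length - (s.length - c) = c by omega] at h2
  · intro h c hc
    rw [mem_partialSums_flat, hs.exists_psum_iff] at hc
    rw [mem_partialSums_flat, hr.exists_psum_iff, hlen]
    exact ⟨hc.1, hc.2.imp_right (Or.imp_right fun h3 => h h3)⟩

theorem RowList.dominates_iff {m n : ℕ} {r s : List ℤ} (hr : RowList m n r) (hs : RowList m n s)
    (hlen : r.length = s.length) :
    Dominates (wtZ m n r) (wtZ m n s) ↔ List.Forall₂ (· ≤ ·) r s := by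
  constructor
  · intro h
    rw [List.forall₂_iff_get]
    refine ⟨hlen, fun k h1 h2 => ?_⟩
    change r[k] ≤ s[k]
    have hl := hs.lower _ (List.getElem_mem h2)
    have hu := hs.upper _ (List.getElem_mem h2)
    have h3 := h ⟨(s[k] + 1 + m).toNat, by omega⟩
    dsimp only at h3
    rw [hr.psum_eq (by omega), hs.psum_eq (by omega),
      show (((s[k] + 1 + m).toNat : ℕ) : ℤ) - m = s[k] + 1 by omega] at h3
    have h4 := (getElem_lt_iff hs.sorted h2 (s[k] + 1)).mp (by omega)
    have h5 := (getElem_lt_iff hr.sorted h1 (s[k] + 1)).mpr (by omega)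
    omega
  · intro h i
    rw [hr.psum_eq (by omega), hs.psum_eq (by omega)]
    clear hr hs hlen
    induction h with
    | nil => exact le_rfl
    | cons hxy _ ih =>
      simp only [List.countP_cons, decide_eq_true_eq]
      split_ifs <;> omega

theorem RowList.eq_of_wtZ_eq {m n : ℕ} {r s : List ℤ} (hr : RowList m n r) (hs : RowList m n s)
    (h : wtZ m n r = wtZ m n s) : r = s := by
  have hp : r.Perm s := by
    rw [List.perm_iff_count]
    intro x
    by_cases hx : -(m : ℤ) ≤ x ∧ x < (n : ℤ) - m
    · have := congrFun h ⟨(x + m).toNat, by omega⟩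
      simp only [wtZ] at this
      rwa [show (((x + m).toNat : ℕ) : ℤ) - m = x by omega] at this
    · rw [List.count_eq_zero.mpr fun hm => hx ⟨hr.lower x hm, hr.upper x hm⟩,
        List.count_eq_zero.mpr fun hm => hx ⟨hs.lower x hm, hs.upper x hm⟩]
  exact hp.eq_of_pairwise (fun a b _ _ h1 h2 => le_antisymm h2 h1) hr.sorted hs.sorted

theorem exists_rowList {m n : ℕ} (b : Fin n → ℕ) : ∃ r, RowList m n r ∧ wtZ m n r = b := by
  set M : Multiset ℤ := ∑ i : Fin n, Multiset.replicate (b i) ((i : ℤ) - m) with hM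
  have hmem : ∀ x ∈ M, ∃ i : Fin n, x = (i : ℤ) - m := by
    intro x hx
    rw [hM, Multiset.mem_sum] at hx
    obtain ⟨i, -, hi⟩ := hx
    exact ⟨i, Multiset.eq_of_mem_replicate hi⟩
  refine ⟨M.sort (· ≥ ·), ⟨Multiset.pairwise_sort _ _, fun x hx => ?_, fun x hx => ?_⟩, ?_⟩
  · obtain ⟨i, rfl⟩ := hmem x ((Multiset.mem_sort _).mp hx)
    omega
  · obtain ⟨i, rfl⟩ := hmem x ((Multiset.mem_sort _).mp hx)
    omega
  · funext i
    rw [wtZ, ← Multiset.coe_count, Multiset.sort_eq, hM, Multiset.count_sum',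
      Finset.sum_eq_single i]
    · rw [Multiset.count_replicate_self]
    · intro j _ hj
      rw [Multiset.count_replicate, if_neg]
      intro hc
      exact hj (Fin.ext (by omega))
    · simp

/-- Compatibility of a list of rows with a word, given the preceding row and letter. -/
def Compat : ℤ → ℕ → List ℕ → List ℤ → Prop
  | _, _, [], [] => True
  | x₀, p₀, p :: l, x :: r => x ≤ p ∧ x ≤ x₀ ∧ (p ≤ p₀ → x < x₀) ∧ Compat x p l r
  | _, _, _, _ => False

/-- The pointwise greatest list of rows compatible with a word. -/
def topRows : ℤ → ℕ → List ℕ → List ℤ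
  | _, _, [] => []
  | x₀, p₀, p :: l =>
    min (if p₀ < p then x₀ else x₀ - 1) p :: topRows (min (if p₀ < p then x₀ else x₀ - 1) p) p l

/-- The rows `r` lie below the rows `s` and decrease weakly, strictly where `s` does. -/
def Below : ℤ → ℤ → List ℤ → List ℤ → Prop
  | _, _, [], [] => True
  | x₀, y₀, x :: r, y :: s => x ≤ y ∧ x ≤ x₀ ∧ (y < y₀ → x < x₀) ∧ Below x y r s
  | _, _, _, _ => False

theorem compat_iff_below {x₀ y₀ : ℤ} {p₀ : ℕ} (h1 : x₀ ≤ y₀) (h2 : y₀ ≤ p₀) (l : List ℕ)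
    (r : List ℤ) : Compat x₀ p₀ l r ↔ Below x₀ y₀ r (topRows y₀ p₀ l) := by
  induction l generalizing x₀ y₀ p₀ r with
  | nil => cases r <;> simp [Compat, Below, topRows]
  | cons p l ih =>
    cases r with
    | nil => simp [Compat, Below, topRows]
    | cons x r =>
      rw [topRows, Compat, Below]
      set y := min (if p₀ < p then y₀ else y₀ - 1) (p : ℤ) with hy
      constructor
      · rintro ⟨h3, h4, h5, h6⟩
        have hxy : x ≤ y := by split_ifs at hy <;> omega
        exact ⟨hxy, h4, by split_ifs at hy <;> omega, (ih hxy (min_le_right _ _) r).mp h6⟩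
      · rintro ⟨h3, h4, h5, h6⟩
        exact ⟨by omega, h4, by split_ifs at hy <;> omega, (ih h3 (min_le_right _ _) r).mpr h6⟩

theorem length_topRows (y₀ : ℤ) (p₀ : ℕ) (l : List ℕ) : (topRows y₀ p₀ l).length = l.length := by
  induction l generalizing y₀ p₀ with
  | nil => rfl
  | cons p l ih => simp [topRows, ih]

theorem topRows_sorted (y₀ : ℤ) (p₀ : ℕ) (l : List ℕ) :
    (y₀ :: topRows y₀ p₀ l).Pairwise (· ≥ ·) := by
  rw [← List.isChain_iff_pairwise]
  induction l generalizing y₀ p₀ with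
  | nil => simp [topRows]
  | cons p l ih =>
    rw [topRows, List.isChain_cons_cons]
    exact ⟨by split_ifs <;> omega, ih _ _⟩

theorem topRows_lt {N : ℕ} {l : List ℕ} (hl : ∀ p ∈ l, p < N) (y₀ : ℤ) (p₀ : ℕ) :
    ∀ x ∈ topRows y₀ p₀ l, x < N := by
  induction l generalizing y₀ p₀ with
  | nil => simp [topRows]
  | cons p l ih =>
    have hp := hl p List.mem_cons_self
    intro x hx
    rw [topRows, List.mem_cons] at hx
    rcases hx with rfl | hx
    · omega
    · exact ih (fun q hq => hl q (List.mem_cons_of_mem _ hq)) _ _ x hx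

theorem breaks_topRows {y₀ : ℤ} {p₀ : ℕ} (h : y₀ ≤ p₀) (l : List ℕ) :
    breaks (· > ·) (y₀ :: topRows y₀ p₀ l) = breaks (· ≥ ·) (p₀ :: l) := by
  induction l generalizing y₀ p₀ with
  | nil => rw [topRows, breaks_singleton, breaks_singleton]
  | cons p l ih =>
    ext c
    rw [topRows, breaks_cons_cons, breaks_cons_cons, ih (min_le_right _ _)]
    refine or_congr (and_congr_right fun _ => ?_) Iff.rfl
    split_ifs <;> omega

theorem topRows_lower {m : ℕ} {y₀ : ℤ} {p₀ : ℕ} (p : ℕ) (l : List ℕ) :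
    (∀ x ∈ topRows y₀ p₀ (p :: l), -(m : ℤ) ≤ x) ↔
      -(m : ℤ) + des (p₀ :: p :: l) ≤ y₀ ∧ need (p :: l) ≤ m := by
  induction l generalizing y₀ p₀ p with
  | nil =>
    simp only [topRows, List.mem_singleton, forall_eq, des, need]
    split_ifs <;> omega
  | cons q l ih =>
    have hn : need (p :: q :: l) = max (des (p :: q :: l) - p) (need (q :: l)) := rfl
    rw [topRows, List.forall_mem_cons, ih, hn]
    simp only [des]
    generalize (if q ≤ p then 1 else 0) + des (q :: l) = D
    generalize need (q :: l) = n
    split_ifs <;> omega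

theorem topRows_lower_iff {m N : ℕ} {l : List ℕ} (hl : ∀ p ∈ l, p < N) :
    (∀ x ∈ topRows N N l, -(m : ℤ) ≤ x) ↔ need l ≤ m := by
  cases l with
  | nil => simp [topRows, need]
  | cons p l =>
    have hp := hl p List.mem_cons_self
    rw [topRows_lower, need, des, if_pos hp.le]
    omega

theorem Below.forall₂ {x₀ y₀ : ℤ} {r s : List ℤ} (h : Below x₀ y₀ r s) :
    List.Forall₂ (· ≤ ·) r s := by
  induction r generalizing x₀ y₀ s with
  | nil =>
    cases s with
    | nil => exact List.Forall₂.nil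
    | cons => exact h.elim
  | cons x r ih =>
    cases s with
    | nil => exact h.elim
    | cons y s => exact List.Forall₂.cons h.1 (ih h.2.2.2)

theorem Below.sorted {x₀ y₀ : ℤ} {r s : List ℤ} (h : Below x₀ y₀ r s) :
    (x₀ :: r).Pairwise (· ≥ ·) := by
  rw [← List.isChain_iff_pairwise]
  induction r generalizing x₀ y₀ s with
  | nil => simp
  | cons x r ih =>
    cases s with
    | nil => exact h.elim
    | cons y s => exact List.isChain_cons_cons.mpr ⟨h.2.1, ih h.2.2.2⟩

theorem below_iff {x₀ y₀ : ℤ} {r s : List ℤ} :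
    Below x₀ y₀ r s ↔ List.Forall₂ (· ≤ ·) r s ∧ (x₀ :: r).Pairwise (· ≥ ·) ∧
      breaks (· > ·) (y₀ :: s) ⊆ breaks (· > ·) (x₀ :: r) := by
  constructor
  · refine fun h => ⟨h.forall₂, h.sorted, ?_⟩
    induction r generalizing x₀ y₀ s with
    | nil =>
      cases s with
      | nil => simp [breaks_singleton]
      | cons => exact h.elim
    | cons x r ih =>
      cases s with
      | nil => exact h.elim
      | cons y s =>
        intro c hc
        rw [breaks_cons_cons] at hc ⊢
        exact hc.imp (fun hc => ⟨hc.1, h.2.2.1 hc.2⟩) fun hc => ⟨hc.1, ih h.2.2.2 hc.2⟩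
  · rintro ⟨h1, h2, h3⟩
    induction h1 generalizing x₀ y₀ with
    | nil => trivial
    | @cons x y r s hxy _ ih =>
      refine ⟨hxy, (List.pairwise_cons.mp h2).1 x List.mem_cons_self, fun hy => ?_,
        ih (List.pairwise_cons.mp h2).2 fun c hc => ?_⟩
      · have := h3 ((breaks_cons_cons _ _ _ _ 1).mpr (Or.inl ⟨rfl, hy⟩))
        rcases (breaks_cons_cons _ _ _ _ _).mp this with h4 | ⟨-, h4⟩
        · exact h4.2
        · exact absurd (breaks_lt h4).1 (by simp)
      · have hpos := (breaks_lt hc).1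
        have := h3 ((breaks_cons_cons _ _ _ _ (c + 1)).mpr (Or.inr ⟨by omega, by simpa using hc⟩))
        rcases (breaks_cons_cons _ _ _ _ _).mp this with h4 | ⟨-, h4⟩
        · omega
        · simpa using h4

/-- The weak composition attached to a word, for the shift `m`. -/
def wordComp (N m : ℕ) (l : List ℕ) : Fin (m + N) → ℕ := wtZ m (m + N) (topRows N N l)

theorem rowList_topRows {m N : ℕ} {l : List ℕ} (hl : ∀ p ∈ l, p < N) (hm : need l ≤ m) :
    RowList m (m + N) (topRows N N l) :=
  ⟨(List.pairwise_cons.mp (topRows_sorted N N l)).2, (topRows_lower_iff hl).mpr hm, fun x hx => by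
    have := topRows_lt hl N N x hx
    push_cast
    omega⟩

theorem compat_need {m N : ℕ} {l : List ℕ} (hl : ∀ p ∈ l, p < N) {r : List ℤ}
    (h : Compat N N l r) (hr : ∀ x ∈ r, -(m : ℤ) ≤ x) : need l ≤ m := by
  rw [← topRows_lower_iff hl]
  rw [compat_iff_below le_rfl le_rfl] at h
  have := h.forall₂
  generalize topRows N N l = s at this
  clear h
  induction this with
  | nil => simp
  | @cons x y r s hxy _ ih =>
    rw [List.forall_mem_cons] at hr ⊢
    exact ⟨by omega, ih hr.2⟩

theorem compat_iff {m N : ℕ} {l : List ℕ} (hl : ∀ p ∈ l, p < N) (hm : need l ≤ m) {r : List ℤ}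
    (hr : RowList m (m + N) r) :
    Compat N N l r ↔ r.length = l.length ∧ Dominates (wtZ m (m + N) r) (wordComp N m l) ∧
      Refines (flat (wtZ m (m + N) r)) (flat (wordComp N m l)) := by
  have hs := rowList_topRows hl hm
  have hlen : r.length = l.length → r.length = (topRows N N l).length := by
    rw [length_topRows]
    exact id
  have hsort : ((N : ℤ) :: r).Pairwise (· ≥ ·) := by
    refine List.pairwise_cons.mpr ⟨fun x hx => ?_, hr.sorted⟩
    have := hr.upper x hx
    push_cast at this
    omega
  have hbr : ∀ r' : List ℤ, (∀ x ∈ r', x < N) → ∀ c, c ∈ breaks (· > ·) ((N : ℤ) :: r') ↔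
      c = 1 ∧ r' ≠ [] ∨ 1 ≤ c ∧ c - 1 ∈ breaks (· > ·) r' := by
    intro r' h' c
    cases r' with
    | nil => simp [breaks_singleton, breaks_nil]
    | cons x r' =>
      rw [breaks_cons_cons]
      have := h' x List.mem_cons_self
      simp [this]
  have hr' : ∀ x ∈ r, x < N := fun x hx => by
    have := hr.upper x hx
    push_cast at this
    omega
  rw [compat_iff_below le_rfl le_rfl, below_iff]
  constructor
  · rintro ⟨h1, -, h3⟩
    have hl1 := h1.length_eq
    refine ⟨by rw [hl1, length_topRows], (hr.dominates_iff hs hl1).mpr h1,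
      (hr.refines_iff hs hl1).mpr fun c hc => ?_⟩
    have hpos := (breaks_lt hc).1
    have := h3 ((hbr _ (topRows_lt hl N N) (c + 1)).mpr (Or.inr ⟨by omega, by simpa using hc⟩))
    rcases (hbr _ hr' _).mp this with h4 | ⟨-, h4⟩
    · omega
    · simpa using h4
  · rintro ⟨h1, h2, h3⟩
    have hl1 := hlen h1
    refine ⟨(hr.dominates_iff hs hl1).mp h2, hsort, fun c hc => ?_⟩
    rcases (hbr _ (topRows_lt hl N N) _).mp hc with ⟨h4, h5⟩ | ⟨h4, h5⟩
    · refine (hbr _ hr' _).mpr (Or.inl ⟨h4, fun h => h5 ?_⟩)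
      rw [h] at hl1
      exact List.length_eq_zero_iff.mp hl1.symm
    · exact (hbr _ hr' _).mpr (Or.inr ⟨h4, (hr.refines_iff hs hl1).mp h3 h5⟩)

theorem sum_wordComp {m N : ℕ} {l : List ℕ} (hl : ∀ p ∈ l, p < N) (hm : need l ≤ m) :
    ∑ i, wordComp N m l i = l.length := by
  rw [wordComp, (rowList_topRows hl hm).sum_eq, length_topRows]

theorem partialSums_wordComp {m N : ℕ} {l : List ℕ} (hl : ∀ p ∈ l, p < N) (hm : need l ≤ m)
    (c : ℕ) : c ∈ partialSums (flat (wordComp N m l)) ↔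
      c ≤ l.length ∧ l.length - c ∈ partialSums (desStrict l) := by
  have hb : breaks (· > ·) (topRows N N l) = breaks (· ≥ ·) l := by
    cases l with
    | nil => rw [topRows, breaks_nil, breaks_nil]
    | cons p l => rw [topRows, breaks_topRows (min_le_right _ _)]
  rw [mem_partialSums_flat, wordComp, (rowList_topRows hl hm).exists_psum_iff, length_topRows,
    mem_partialSums_desStrict, hb]
  refine and_congr_right fun hc => ?_
  constructor
  · rintro (h | h | h)
    · exact Or.inr (Or.inl (by omega))
    · exact Or.inl (by omega)
    · exact Or.inr (Or.inr h)
  · rintro (h | h | h)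
    · exact Or.inr (Or.inl (by omega))
    · exact Or.inl (by omega)
    · exact Or.inr (Or.inr h)

theorem shiftComp_wordComp {m n N : ℕ} (hnm : n ≤ m) {l : List ℕ} (hl : ∀ p ∈ l, p < N)
    (hn : need l ≤ n) : shiftComp (m - n) (m + N) (wordComp N n l) = wordComp N m l := by
  funext i
  simp only [shiftComp, wordComp, wtZ]
  split_ifs with h
  · congr 1
    omega
  · rw [eq_comm, List.count_eq_zero]
    intro hx
    have := (topRows_lower_iff hl).mpr hn _ hx
    omega

/-- The order in which the crosses of a pipe dream are read. -/
def ReadLT (c d : ℕ × ℕ) : Prop := d.1 < c.1 ∨ c.1 = d.1 ∧ c.2 < d.2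

theorem ReadLT.trans {c d e : ℕ × ℕ} (h : ReadLT c d) (h' : ReadLT d e) : ReadLT c e := by
  unfold ReadLT at *
  omega

theorem readLT_irrefl (c : ℕ × ℕ) : ¬ ReadLT c c := by
  unfold ReadLT
  omega

instance : IsTrans (ℕ × ℕ) ReadLT := ⟨fun _ _ _ => ReadLT.trans⟩

/-- The crosses of a pipe dream in reading order. -/
def cells (P : Finset (ℕ × ℕ)) : List (ℕ × ℕ) :=
  ((List.range (P.sup Prod.fst + 1)).reverse).flatMap
    (fun i => ((List.range (P.sup Prod.snd + 1)).filter (fun j => decide ((i, j) ∈ P))).map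
      (fun j => (i, j)))

theorem readWord_eq (P : Finset (ℕ × ℕ)) :
    readWord P = (cells P).map fun c => c.1 + c.2 := by
  simp only [readWord, cells, List.map_flatMap, List.map_map, Function.comp_def]

theorem mem_cells {P : Finset (ℕ × ℕ)} {c : ℕ × ℕ} : c ∈ cells P ↔ c ∈ P := by
  obtain ⟨i, j⟩ := c
  simp only [cells, List.mem_flatMap, List.mem_reverse, List.mem_range, List.mem_map,
    List.mem_filter, decide_eq_true_eq, Prod.mk.injEq]
  constructor
  · rintro ⟨i', -, j', ⟨-, h⟩, rfl, rfl⟩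
    exact h
  · intro h
    have h1 : i ≤ P.sup Prod.fst := Finset.le_sup (f := Prod.fst) h
    have h2 : j ≤ P.sup Prod.snd := Finset.le_sup (f := Prod.snd) h
    exact ⟨i, by omega, j, ⟨by omega, h⟩, rfl, rfl⟩

theorem cells_sorted (P : Finset (ℕ × ℕ)) : (cells P).Pairwise ReadLT := by
  rw [cells, List.pairwise_flatMap]
  constructor
  · intro i _
    rw [List.pairwise_map]
    exact (List.pairwise_lt_range.filter _).imp fun h => Or.inr ⟨rfl, h⟩
  · rw [List.pairwise_reverse]
    refine List.pairwise_lt_range.imp fun {i i'} h => ?_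
    simp only [List.mem_map]
    rintro _ ⟨j, -, rfl⟩ _ ⟨j', -, rfl⟩
    exact Or.inl h

theorem nodup_of_sorted {Z : List (ℕ × ℕ)} (h : Z.Pairwise ReadLT) : Z.Nodup :=
  h.imp fun {c d} h' => by
    rintro rfl
    exact readLT_irrefl _ h'

theorem cells_toFinset {Z : List (ℕ × ℕ)} (h : Z.Pairwise ReadLT) : cells Z.toFinset = Z := by
  refine List.Perm.eq_of_pairwise (le := ReadLT) ?_ (cells_sorted _) h ?_
  · intro a b _ _ h1 h2
    exact absurd (h1.trans h2) (readLT_irrefl a)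
  · rw [List.perm_ext_iff_of_nodup (nodup_of_sorted (cells_sorted _)) (nodup_of_sorted h)]
    simp [mem_cells]

theorem toFinset_cells (P : Finset (ℕ × ℕ)) : (cells P).toFinset = P := by
  ext c
  rw [List.mem_toFinset, mem_cells]

/-- The rows of the crosses of a pipe dream in reading order, shifted down by `m`. -/
def rows (m : ℕ) (Z : List (ℕ × ℕ)) : List ℤ := Z.map fun c => (c.1 : ℤ) - m

theorem isChain_iff_compat {m p₀ : ℕ} {c₀ : ℕ × ℕ} (h₀ : c₀.1 + c₀.2 = p₀ + m)
    {Z : List (ℕ × ℕ)} {l : List ℕ} (h : (Z.map fun c => c.1 + c.2) = l.map (· + m)) :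
    (c₀ :: Z).IsChain ReadLT ↔ Compat ((c₀.1 : ℤ) - m) p₀ l (rows m Z) := by
  induction l generalizing c₀ p₀ Z with
  | nil =>
    obtain rfl : Z = [] := by simpa using h
    simp [rows, Compat]
  | cons p l ih =>
    cases Z with
    | nil => simp at h
    | cons c Z =>
      rw [List.map_cons, List.map_cons, List.cons.injEq] at h
      rw [rows, List.map_cons, Compat, List.isChain_cons_cons, ih h.1 h.2, ← rows]
      have h1 := h.1
      rw [ReadLT, ← and_assoc, ← and_assoc]
      refine and_congr_left fun _ => ?_
      omega

theorem exists_cells {m p₀ : ℕ} {x₀ : ℤ} {l : List ℕ} {r : List ℤ} (h : Compat x₀ p₀ l r)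
    (hr : ∀ x ∈ r, -(m : ℤ) ≤ x) :
    ∃ Z : List (ℕ × ℕ), (Z.map fun c => c.1 + c.2) = l.map (· + m) ∧ rows m Z = r := by
  induction l generalizing x₀ p₀ r with
  | nil =>
    cases r with
    | nil => exact ⟨[], rfl, rfl⟩
    | cons => exact h.elim
  | cons p l ih =>
    cases r with
    | nil => exact h.elim
    | cons x r =>
      rw [List.forall_mem_cons] at hr
      obtain ⟨Z, h1, h2⟩ := ih h.2.2.2 hr.2
      have hx := h.1
      refine ⟨((x + m).toNat, (p - x).toNat) :: Z, ?_, ?_⟩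
      · rw [List.map_cons, List.map_cons, h1]
        congr 1
        omega
      · rw [rows, List.map_cons, ← rows, h2]
        congr 1
        omega

theorem eq_of_rows_eq {m : ℕ} {Z Z' : List (ℕ × ℕ)} (h : rows m Z = rows m Z')
    (h' : (Z.map fun c => c.1 + c.2) = Z'.map fun c => c.1 + c.2) : Z = Z' := by
  induction Z generalizing Z' with
  | nil =>
    cases Z' with
    | nil => rfl
    | cons => simp at h'
  | cons c Z ih =>
    cases Z' with
    | nil => simp at h'
    | cons c' Z' =>
      simp only [rows, List.map_cons, List.cons.injEq] at h h'
      rw [ih h.2 h'.2]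
      congr 1
      ext <;> omega

theorem lt_of_mem_cells {m N : ℕ} {Z : List (ℕ × ℕ)} {l : List ℕ} (hl : ∀ p ∈ l, p < N)
    (h : (Z.map fun c => c.1 + c.2) = l.map (· + m)) : ∀ c ∈ Z, c.1 < m + N := by
  intro c hc
  have : c.1 + c.2 ∈ l.map (· + m) := h ▸ List.mem_map_of_mem (f := fun c => c.1 + c.2) hc
  obtain ⟨p, hp, hpc⟩ := List.mem_map.mp this
  have := hl p hp
  omega

theorem pairwise_readLT_iff_compat {m N : ℕ} {Z : List (ℕ × ℕ)} {l : List ℕ} (hl : ∀ p ∈ l, p < N)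
    (h : (Z.map fun c => c.1 + c.2) = l.map (· + m)) :
    Z.Pairwise ReadLT ↔ Compat N N l (rows m Z) := by
  have := isChain_iff_compat (m := m) (p₀ := N) (c₀ := (N + m, 0)) rfl h
  rw [show (((N + m, 0) : ℕ × ℕ).1 : ℤ) - m = N by push_cast; ring] at this
  rw [← this, List.isChain_iff_pairwise, List.pairwise_cons]
  refine ⟨fun h' => ⟨fun c hc => Or.inl ?_, h'⟩, And.right⟩
  have := lt_of_mem_cells hl h c hc
  dsimp only
  omega

theorem rowList_rows {m N : ℕ} {P : Finset (ℕ × ℕ)} {l : List ℕ} (hl : ∀ p ∈ l, p < N)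
    (h : readWord P = l.map (· + m)) : RowList m (m + N) (rows m (cells P)) := by
  rw [readWord_eq] at h
  refine ⟨?_, ?_, ?_⟩
  · rw [rows, List.pairwise_map]
    refine (cells_sorted P).imp fun {c d} hcd => ?_
    unfold ReadLT at hcd
    omega
  · simp only [rows, List.mem_map]
    rintro _ ⟨c, -, rfl⟩
    omega
  · simp only [rows, List.mem_map]
    rintro _ ⟨c, hc, rfl⟩
    have := lt_of_mem_cells hl h c hc
    omega

theorem wtFin_eq (m n : ℕ) (P : Finset (ℕ × ℕ)) : wtFin n P = wtZ m n (rows m (cells P)) := by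
  funext i
  rw [wtFin, rowWt, wtZ, rows, List.count, List.countP_map]
  have h : (P.filter fun c => c.1 = (i : ℕ)) =
      ((cells P).filter fun c => decide (c.1 = (i : ℕ))).toFinset := by
    ext c
    simp [mem_cells]
  rw [h, List.toFinset_card_of_nodup ((nodup_of_sorted (cells_sorted P)).filter _),
    ← List.countP_eq_length_filter]
  refine List.countP_congr fun c _ => ?_
  simp

theorem mem_wcFinset_of_refines {n : ℕ} {a b : Fin n → ℕ} (h : Refines (flat b) (flat a)) :
    b ∈ wcFinset n (∑ i, a i) := by
  rw [SlidePaper.refines_iff (flat_pos _), sum_flat, sum_flat] at h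
  rw [wcFinset, Fintype.mem_piFinset]
  intro i
  rw [Finset.mem_range, ← h.1]
  exact Nat.lt_succ_of_le (Finset.single_le_sum (fun _ _ => Nat.zero_le _) (Finset.mem_univ i))

theorem schubertPoly_shiftPerm {w : Equiv.Perm ℕ} {N : ℕ} (hN : ∀ i, N ≤ i → w i = i) (m : ℕ) :
    SchubertPoly (m + N) (shiftPerm m w) =
      ∑ l ∈ (redWords w).filter fun l => need l ≤ m, slideF (wordComp N m l) := by
  simp only [slideF]
  rw [Finset.sum_sigma', ← finsum_mem_coe_finset, SchubertPoly]
  have hlt : ∀ l, Red w l → ∀ p ∈ l, p < N := fun l hl p hp => by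
    have := hl.letters hN p hp
    omega
  have hunshift : ∀ l : List ℕ, (l.map (· + m)).map (· - m) = l := fun l => by
    simp [Function.comp_def]
  refine finsum_mem_eq_of_bijOn
    (fun P => ⟨(readWord P).map (· - m), wtFin (m + N) P⟩) ⟨?_, ?_, ?_⟩ fun P _ => rfl
  · intro P hP
    obtain ⟨l, hl, hP'⟩ := red_shiftPerm.mp (red_iff.mpr hP)
    have hPc := hP'
    rw [readWord_eq] at hPc
    have hc := (pairwise_readLT_iff_compat (hlt l hl) hPc).mp (cells_sorted P)
    have hr := rowList_rows (hlt l hl) hP'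
    have hm := compat_need (hlt l hl) hc hr.lower
    have := (compat_iff (hlt l hl) hm hr).mp hc
    simp only [hP', hunshift, Finset.mem_coe, Finset.mem_sigma, Finset.mem_filter, mem_redWords,
      wtFin_eq m]
    exact ⟨⟨hl, hm⟩, mem_wcFinset_of_refines this.2.2, this.2⟩
  · intro P hP P' hP' h
    obtain ⟨l, hl, hPl⟩ := red_shiftPerm.mp (red_iff.mpr hP)
    obtain ⟨l', hl', hPl'⟩ := red_shiftPerm.mp (red_iff.mpr hP')
    simp only [hPl, hPl', hunshift, Sigma.mk.injEq, heq_eq_eq] at h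
    obtain ⟨rfl, h⟩ := h
    rw [wtFin_eq m, wtFin_eq m] at h
    have := (rowList_rows (hlt l hl) hPl).eq_of_wtZ_eq (rowList_rows (hlt l hl) hPl') h
    rw [← toFinset_cells P, ← toFinset_cells P', eq_of_rows_eq this]
    rw [← readWord_eq, ← readWord_eq, hPl, hPl']
  · rintro ⟨l, b⟩ hb
    simp only [Finset.mem_coe, Finset.mem_sigma, Finset.mem_filter, mem_redWords] at hb
    obtain ⟨⟨hl, hm⟩, -, hdom, href⟩ := hb
    obtain ⟨r, hr, rfl⟩ := exists_rowList (m := m) b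
    have hlen : r.length = l.length := by
      have := ((SlidePaper.refines_iff (flat_pos _)).mp href).1
      rwa [sum_flat, sum_flat, hr.sum_eq, sum_wordComp (hlt l hl) hm] at this
    have hc := (compat_iff (hlt l hl) hm hr).mpr ⟨hlen, hdom, href⟩
    obtain ⟨Z, hZ, rfl⟩ := exists_cells hc hr.lower
    have hs := (pairwise_readLT_iff_compat (hlt l hl) hZ).mpr hc
    have hrw : readWord Z.toFinset = l.map (· + m) := by rw [readWord_eq, cells_toFinset hs, hZ]
    refine ⟨Z.toFinset, red_iff.mp (red_shiftPerm.mpr ⟨l, hl, hrw⟩), ?_⟩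
    simp only [hrw, hunshift, wtFin_eq m, cells_toFinset hs]

theorem coeff_slideF {n : ℕ} (a b : Fin n → ℕ) :
    MvPolynomial.coeff (Finsupp.equivFunOnFinite.symm b) (slideF a) =
      if Dominates b a ∧ Refines (flat b) (flat a) then 1 else 0 := by
  simp only [slideF, MvPolynomial.coeff_sum, MvPolynomial.coeff_monomial,
    EmbeddingLike.apply_eq_iff_eq]
  rw [Finset.sum_ite_eq' _ b fun _ => (1 : ℤ)]
  refine if_congr ?_ rfl rfl
  rw [Finset.mem_filter]
  exact ⟨And.right, fun h => ⟨mem_wcFinset_of_refines h.2, h⟩⟩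

theorem coeff_slideF_self {n : ℕ} (a : Fin n → ℕ) :
    MvPolynomial.coeff (Finsupp.equivFunOnFinite.symm a) (slideF a) = 1 := by
  rw [coeff_slideF, if_pos]
  exact ⟨fun _ => le_rfl, (SlidePaper.refines_iff (flat_pos _)).mpr ⟨rfl, subset_rfl⟩⟩

theorem coeff_slideF_nonneg {n : ℕ} (a b : Fin n → ℕ) :
    0 ≤ MvPolynomial.coeff (Finsupp.equivFunOnFinite.symm b) (slideF a) := by
  rw [coeff_slideF]
  split_ifs <;> norm_num

theorem psum_injective {n : ℕ} {a b : Fin n → ℕ} (h : ∀ i : Fin (n + 1), psum a i = psum b i) :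
    a = b := by
  funext i
  have h1 := h i.castSucc
  have h2 := h i.succ
  rw [Fin.val_castSucc] at h1
  rw [Fin.val_succ, psum_succ a i.2, psum_succ b i.2, h1] at h2
  exact Nat.add_left_cancel h2

theorem eq_zero_of_sum_slideF_eq_zero {n : ℕ} {c : (Fin n → ℕ) → ℤ} (s : Finset (Fin n → ℕ))
    (hs : ∀ a, c a ≠ 0 → a ∈ s) (h : ∑ a ∈ s, c a • slideF a = 0) : c = 0 := by
  by_contra hc
  obtain ⟨a₀, ha₀⟩ : ∃ a, c a ≠ 0 := by
    by_contra! h'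
    exact hc (funext h')
  obtain ⟨a, ha, hmin⟩ := (s.filter fun a => c a ≠ 0).exists_min_image
    (fun a => ∑ j : Fin (n + 1), psum a j) ⟨a₀, Finset.mem_filter.mpr ⟨hs _ ha₀, ha₀⟩⟩
  rw [Finset.mem_filter] at ha
  have h1 := congrArg (MvPolynomial.coeff (Finsupp.equivFunOnFinite.symm a)) h
  rw [MvPolynomial.coeff_sum, Finset.sum_eq_single a, MvPolynomial.coeff_smul,
    coeff_slideF_self, MvPolynomial.coeff_zero] at h1
  · exact ha.2 (by simpa using h1)
  · intro b hb hba
    rw [MvPolynomial.coeff_smul, coeff_slideF]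
    by_cases hcb : c b = 0
    · rw [hcb, zero_smul]
    · rw [if_neg, smul_zero]
      rintro ⟨hd, -⟩
      refine hba (psum_injective fun i => ?_)
      have hle := hmin b (Finset.mem_filter.mpr ⟨hb, hcb⟩)
      refine le_antisymm (hd i) (not_lt.mp fun hlt => absurd hle (not_le.mpr ?_))
      exact Finset.sum_lt_sum (fun j _ => hd j) ⟨i, Finset.mem_univ _, hlt⟩
  · exact fun h' => absurd ha.1 h'

theorem finsum_eq_sum_of_mem {ι M : Type*} [AddCommGroup M] {c : ι → ℤ} (F : ι → M)
    (s : Finset ι) (hs : ∀ a, c a ≠ 0 → a ∈ s) : ∑ᶠ a, c a • F a = ∑ a ∈ s, c a • F a := by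
  refine finsum_eq_sum_of_support_subset _ fun a ha => hs a fun h => ha ?_
  simp only [h, zero_smul]

theorem slideF_coeff_unique {n : ℕ} {c c' : (Fin n → ℕ) → ℤ} (hc : {a | c a ≠ 0}.Finite)
    (hc' : {a | c' a ≠ 0}.Finite)
    (h : ∑ᶠ a, c a • slideF a = ∑ᶠ a, c' a • slideF a) : c = c' := by
  have h1 : ∀ a, c a ≠ 0 → a ∈ hc.toFinset ∪ hc'.toFinset := fun a ha => by simp [ha]
  have h2 : ∀ a, c' a ≠ 0 → a ∈ hc.toFinset ∪ hc'.toFinset := fun a ha => by simp [ha]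
  rw [finsum_eq_sum_of_mem _ _ h1, finsum_eq_sum_of_mem _ _ h2, ← sub_eq_zero,
    ← Finset.sum_sub_distrib] at h
  simp only [← sub_smul] at h
  refine sub_eq_zero.mp (eq_zero_of_sum_slideF_eq_zero (c := c - c') _ (fun a ha => ?_) h)
  by_cases hca : c a = 0
  · exact h2 a fun hca' => ha (by simp [hca, hca'])
  · exact h1 a hca

/-- The number of elements of `s` which `A` sends to a given value. -/
noncomputable def fiberCard {ι κ : Type*} (s : Finset κ) (A : κ → ι) (a : ι) : ℤ :=
  (s.filter fun l => A l = a).card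

theorem mem_image_of_fiberCard_ne_zero {ι κ : Type*} {s : Finset κ} {A : κ → ι} {a : ι}
    (ha : fiberCard s A a ≠ 0) : a ∈ s.image A := by
  obtain ⟨l, hl⟩ := Finset.card_ne_zero.mp (Nat.cast_ne_zero.mp ha)
  rw [Finset.mem_filter] at hl
  exact Finset.mem_image.mpr ⟨l, hl⟩

theorem finite_fiberCard {ι κ : Type*} (s : Finset κ) (A : κ → ι) :
    {a | fiberCard s A a ≠ 0}.Finite :=
  (s.image A).finite_toSet.subset fun _ ha => mem_image_of_fiberCard_ne_zero ha

theorem finsum_fiberCard {ι κ M : Type*} [AddCommGroup M] (s : Finset κ)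
    (A : κ → ι) (F : ι → M) : ∑ᶠ a, fiberCard s A a • F a = ∑ l ∈ s, F (A l) := by
  rw [finsum_eq_sum_of_mem F (s.image A) fun a => mem_image_of_fiberCard_ne_zero,
    Finset.sum_comp]
  exact Finset.sum_congr rfl fun a _ => natCast_zsmul _ _

theorem eq_fiberCard {w : Equiv.Perm ℕ} {N : ℕ} (hN : ∀ i, N ≤ i → w i = i) {n : ℕ}
    {c : (Fin (n + N) → ℕ) → ℤ} (hc : {a | c a ≠ 0}.Finite)
    (h : SchubertPoly (n + N) (shiftPerm n w) = ∑ᶠ a : Fin (n + N) → ℕ, c a • slideF a) :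
    c = fiberCard ((redWords w).filter fun l => need l ≤ n) (wordComp N n) := by
  refine slideF_coeff_unique hc (finite_fiberCard _ _) ?_
  rw [← h, schubertPoly_shiftPerm hN, finsum_fiberCard _ _ slideF]

theorem sum_slideF_shiftComp {w : Equiv.Perm ℕ} {N : ℕ} (hN : ∀ i, N ≤ i → w i = i) {n m : ℕ}
    (hnm : n ≤ m) :
    ∑ l ∈ (redWords w).filter (fun l => need l ≤ n),
        slideF (shiftComp (m - n) (m + N) (wordComp N n l)) =
      ∑ l ∈ (redWords w).filter (fun l => need l ≤ n), slideF (wordComp N m l) := by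
  refine Finset.sum_congr rfl fun l hl => ?_
  rw [Finset.mem_filter, mem_redWords] at hl
  rw [shiftComp_wordComp hnm (fun p hp => ?_) hl.2]
  have := hl.1.letters hN p hp
  omega

/-- stability of the fundamental slide expansion of Schubert polynomials:
with `η = max(η(w), 0)`, the coefficients of the expansion of `𝔖_{1^η × w}` give the
expansion of `𝔖_{1^m × w}` for all `m ≥ η` (with indices shifted), and the Stanley
symmetric function is `S_w = Σ_a c_a F_{flat(a)}`; moreover this is tight. -/
theorem schubert_stability (w : Equiv.Perm ℕ) (hw : w ≠ 1) (N : ℕ)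
    (hN : ∀ i, N ≤ i → w i = i) (ηn : ℕ) (hη : (ηn : ℤ) = max (eta w) 0) :
    (∀ c : (Fin (ηn + N) → ℕ) → ℤ, {a | c a ≠ 0}.Finite →
      SchubertPoly (ηn + N) (shiftPerm ηn w) = ∑ᶠ a : Fin (ηn + N) → ℕ, c a • slideF a →
      ((∀ m : ℕ, ηn ≤ m →
        SchubertPoly (m + N) (shiftPerm m w)
          = ∑ᶠ a : Fin (ηn + N) → ℕ, c a • slideF (shiftComp (m - ηn) (m + N) a)) ∧
       StanleySym w = ∑ᶠ a : Fin (ηn + N) → ℕ, c a • FqsFun (flat a))) ∧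
    (∀ n' m : ℕ, n' < m → ∀ c' : (Fin (n' + N) → ℕ) → ℤ, {a | c' a ≠ 0}.Finite →
      SchubertPoly (n' + N) (shiftPerm n' w) = ∑ᶠ a : Fin (n' + N) → ℕ, c' a • slideF a →
      SchubertPoly (m + N) (shiftPerm m w)
        = ∑ᶠ a : Fin (n' + N) → ℕ, c' a • slideF (shiftComp (m - n') (m + N) a) →
      eta w ≤ (n' : ℤ)) := by
  constructor
  · intro c hc h
    have hneed : ∀ m, ηn ≤ m → (redWords w).filter (fun l => need l ≤ m) = redWords w :=
      fun m hm => Finset.filter_true_of_mem fun l hl =>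
        (need_le_of_eta_le hw (mem_redWords.mp hl) (hη ▸ le_max_left _ _)).trans hm
    rw [eq_fiberCard hN hc h]
    constructor
    · intro m hm
      rw [finsum_fiberCard _ (wordComp N ηn) fun a => slideF (shiftComp (m - ηn) (m + N) a),
        sum_slideF_shiftComp hN hm, schubertPoly_shiftPerm hN, hneed m hm, hneed ηn le_rfl]
    · rw [finsum_fiberCard _ (wordComp N ηn) fun a => FqsFun (flat a), hneed ηn le_rfl]
      refine stanleySym_eq_of_reverse w (fun l => flat (wordComp N ηn l)) fun l hl => ?_
      have hlt : ∀ p ∈ l, p < N := fun p hp => by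
        have := (mem_redWords.mp hl).letters hN p hp
        omega
      have hm : need l ≤ ηn :=
        need_le_of_eta_le hw (mem_redWords.mp hl) (hη ▸ le_max_left _ _)
      exact ⟨by rw [sum_flat, sum_wordComp hlt hm], partialSums_wordComp hlt hm⟩
  · intro n m hnm c hc h h'
    by_contra! hlt
    obtain ⟨l, hl, hneed⟩ := exists_red_need_eq (v := n + 1) ⟨N, hN⟩ hw (by push_cast; omega)
    rw [eq_fiberCard hN hc h,
      finsum_fiberCard _ (wordComp N n) fun a => slideF (shiftComp (m - n) (m + N) a),
      sum_slideF_shiftComp hN hnm.le, schubertPoly_shiftPerm hN] at h'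
    have hcoeff := congrArg
      (MvPolynomial.coeff (Finsupp.equivFunOnFinite.symm (wordComp N m l))) h'
    rw [MvPolynomial.coeff_sum, MvPolynomial.coeff_sum] at hcoeff
    refine absurd hcoeff (ne_of_gt (Finset.sum_lt_sum_of_subset (i := l)
      (Finset.monotone_filter_right _ fun x _ hx => ?_) ?_ ?_ ?_
      fun _ _ _ => coeff_slideF_nonneg _ _))
    · exact le_trans hx hnm.le
    · exact Finset.mem_filter.mpr ⟨mem_redWords.mpr hl, by omega⟩
    · exact fun hmem => absurd (Finset.mem_filter.mp hmem).2 (by omega)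
    · rw [coeff_slideF_self]
      exact zero_lt_one

end SlidePaper
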